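/- There exists a universal constant c > 0 such that the following holds. Let w be a log-concave function on ℝ^m with 0 < ∫w < ∞, w(0) > 0, and barycenter at the origin, and let q ≥ 1. Then for every unit vector θ ∈ ℝ^m: (vol(K_{m+q}(w) ∩ H_θ⁺)/vol(K_{m+q}(w)))^{1/q} ≥ c, where H_θ⁺ := {x ∈ ℝ^m : ⟨x,θ⟩ ≥ 0}. -/

import Mathlib

open MeasureTheory ProbabilityTheory Real
open scoped ENNReal RealInnerProductSpace Pointwise NNReal

noncomputable section

/-- A nonnegative function is log-concave if `f(λx+(1-λ)y) ≥ f(x)^λ f(y)^{1-λ}`. -/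
def IsLogConcaveFn {E : Type*} [AddCommGroup E] [Module ℝ E] (f : E → ℝ) : Prop :=
  (∀ x, 0 ≤ f x) ∧
  ∀ x y : E, ∀ l : ℝ, 0 ≤ l → l ≤ 1 →
    f x ^ l * f y ^ (1 - l) ≤ f (l • x + (1 - l) • y)

/-- Hilbert-Schmidt (Frobenius) norm of a matrix. -/
def hsNorm {n : ℕ} (A : Matrix (Fin n) (Fin n) ℝ) : ℝ :=
  Real.sqrt (∑ i, ∑ j, (A i j) ^ 2)

/-- Operator norm of a matrix acting on Euclidean space. -/
def opNorm {n : ℕ} (A : Matrix (Fin n) (Fin n) ℝ) : ℝ :=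
  ‖LinearMap.toContinuousLinearMap (Matrix.toEuclideanLin A)‖

/-- Application of a matrix to a Euclidean vector. -/
def mApp {n : ℕ} (A : Matrix (Fin n) (Fin n) ℝ) (x : EuclideanSpace ℝ (Fin n)) :
    EuclideanSpace ℝ (Fin n) := Matrix.toEuclideanLin A x

/-- The random vector `X` has density `f` with respect to Lebesgue measure. -/
def HasDensityFn {Ω : Type*} [MeasurableSpace Ω] (P : Measure Ω) {n : ℕ}
    (X : Ω → EuclideanSpace ℝ (Fin n)) (f : EuclideanSpace ℝ (Fin n) → ℝ) : Prop :=
  Measurable X ∧ Measure.map X P = volume.withDensity fun x => ENNReal.ofReal (f x)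

/-- `X` is isotropic: centered with identity covariance. -/
def Isotropic {Ω : Type*} [MeasurableSpace Ω] (P : Measure Ω) {n : ℕ}
    (X : Ω → EuclideanSpace ℝ (Fin n)) : Prop :=
  (∫ ω, X ω ∂P) = 0 ∧
  ∀ θ η : EuclideanSpace ℝ (Fin n), (∫ ω, ⟪X ω, θ⟫ * ⟪X ω, η⟫ ∂P) = ⟪θ, η⟫

/-- `X` is ψ_α with constant `b`. -/
def IsPsiAlpha {Ω : Type*} [MeasurableSpace Ω] (P : Measure Ω) {n : ℕ}
    (X : Ω → EuclideanSpace ℝ (Fin n)) (α b : ℝ) : Prop :=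
  ∀ p : ℝ, 2 ≤ p → ∀ y : EuclideanSpace ℝ (Fin n),
    (∫ ω, |⟪X ω, y⟫| ^ p ∂P) ^ (1/p) ≤ b * p ^ (1/α) * (∫ ω, ⟪X ω, y⟫ ^ 2 ∂P) ^ ((1:ℝ)/2)

/-- `G` is a standard Gaussian random vector in `ℝⁿ`. -/
def IsStdGaussian {Ω : Type*} [MeasurableSpace Ω] (P : Measure Ω) {n : ℕ}
    (G : Ω → EuclideanSpace ℝ (Fin n)) : Prop :=
  Measurable G ∧
  Measure.map G P = volume.withDensity fun x =>
    ENNReal.ofReal ((2 * π) ^ (-(n:ℝ)/2) * Real.exp (-‖x‖ ^ 2 / 2))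

/-- Surface area of the unit sphere `S^{k-1}` in `ℝᵏ`. -/
def sphereVol (k : ℕ) : ℝ := 2 * π ^ ((k : ℝ)/2) / Real.Gamma ((k : ℝ)/2)

/-- The marginal density `π_F g(x) = ∫_{F^⊥} g(x+y) dy`. -/
def marginalDensity {n : ℕ} (g : EuclideanSpace ℝ (Fin n) → ℝ)
    (F : Submodule ℝ (EuclideanSpace ℝ (Fin n))) (x : EuclideanSpace ℝ (Fin n)) : ℝ :=
  ∫ y : Fᗮ, g (x + y)

/-- `h_{k,p}(u) = vol(S^{k-1}) ∫₀^∞ t^{p+k-1} π_{u(E₀)} g(t u(θ₀)) dt`. -/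
def hkp {n : ℕ} (g : EuclideanSpace ℝ (Fin n) → ℝ)
    (E₀ : Submodule ℝ (EuclideanSpace ℝ (Fin n))) (θ₀ : EuclideanSpace ℝ (Fin n))
    (k : ℕ) (p : ℝ) (u : Matrix (Fin n) (Fin n) ℝ) : ℝ :=
  sphereVol k * ∫ t in Set.Ioi (0:ℝ), t ^ (p + (k:ℝ) - 1) *
    marginalDensity g (Submodule.map (Matrix.toEuclideanLin u) E₀) (t • mApp u θ₀)

/-- Support functional of the one-sided L_q-centroid body `Z⁺_q(w)`. -/
def suppZplus {m : ℕ} (w : EuclideanSpace ℝ (Fin m) → ℝ) (q : ℝ)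
    (y : EuclideanSpace ℝ (Fin m)) : ℝ :=
  (2 * ∫ x, (max ⟪x, y⟫ 0) ^ q * w x) ^ (1/q)

/-- Ball's body `K_q(w) = {x : q ∫₀^∞ t^{q-1} w(tx) dt ≥ 1}`. -/
def ballBody {m : ℕ} (w : EuclideanSpace ℝ (Fin m) → ℝ) (q : ℝ) :
    Set (EuclideanSpace ℝ (Fin m)) :=
  {x | 1 ≤ q * ∫ t in Set.Ioi (0:ℝ), t ^ (q-1) * w (t • x)}

/-- The one-sided L_q-centroid body `Z⁺_q(w)`, as the convex set with support
functional `suppZplus w q`. -/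
def ZplusBody {m : ℕ} (w : EuclideanSpace ℝ (Fin m) → ℝ) (q : ℝ) :
    Set (EuclideanSpace ℝ (Fin m)) :=
  {x | ∀ y, ⟪x, y⟫ ≤ suppZplus w q y}

/-! Integrating in polar coordinates, `∫_C w` and `vol (K_{m+q}(w) ∩ C)`, for a cone `C`, are
integrals over the directions `φ ∈ C` of `m⁻¹ M_m(φ)` and `m⁻¹ M_{m+q}(φ) ^ (m / (m+q))`, where
`M_s(φ) = s ∫₀^∞ t^(s-1) w(tφ) dt`. The two integrands are compared by single-crossing arguments:
testing the ray `t ↦ w(tφ)` against the indicator of an interval gives one direction, using only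
`w ≤ e^m w(0)` (Fradelizi), and testing it against an exponential gives the other, using
log-concavity. Hence they agree up to a factor `e^{±q}` times a power of `w(0)` that does not
depend on `φ`, so that the cone proportions of `K_{m+q}(w)` are those of `w` up to `e^{2q}`. For
half-spaces the latter are at least `1/e` by Grünbaum's inequality.

Fradelizi's inequality follows by integrating log-concavity against a supporting functional of
`log w` at `0`, Grünbaum's from the log-concavity of half-space masses, which is the
Prékopa–Leindler inequality. -/

section PrekopaLeindler

lemma volume_restrict_Ioi_setOf_ofReal_lt (c : ℝ≥0∞) :
    volume.restrict (Set.Ioi 0) {t : ℝ | ENNReal.ofReal t < c} = c := by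
  rw [Measure.restrict_apply (measurableSet_lt ENNReal.measurable_ofReal measurable_const)]
  obtain rfl | hc := eq_or_ne c ⊤
  · simp
  · have hIoo : {t : ℝ | ENNReal.ofReal t < c} ∩ Set.Ioi 0 = Set.Ioo 0 c.toReal := by
      ext t
      rw [Set.mem_inter_iff, and_comm]
      exact and_congr_right fun ht => ENNReal.ofReal_lt_iff_lt_toReal (le_of_lt ht) hc
    rw [hIoo, Real.volume_Ioo, sub_zero, ENNReal.ofReal_toReal hc]

lemma lintegral_eq_lintegral_meas_ofReal_lt {α : Type*} [MeasurableSpace α] (μ : Measure α)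
    [SFinite μ] {f : α → ℝ≥0∞} (hf : Measurable f) :
    ∫⁻ x, f x ∂μ = ∫⁻ t in Set.Ioi (0 : ℝ), μ {x | ENNReal.ofReal t < f x} := by
  have hS : MeasurableSet {z : α × ℝ | ENNReal.ofReal z.2 < f z.1} :=
    measurableSet_lt (by fun_prop) (by fun_prop)
  calc ∫⁻ x, f x ∂μ
      = ∫⁻ x, volume.restrict (Set.Ioi 0) {t : ℝ | ENNReal.ofReal t < f x} ∂μ := by
        simp only [volume_restrict_Ioi_setOf_ofReal_lt]
    _ = μ.prod (volume.restrict (Set.Ioi 0)) {z | ENNReal.ofReal z.2 < f z.1} :=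
        (Measure.prod_apply hS).symm
    _ = ∫⁻ t in Set.Ioi (0 : ℝ), μ {x | ENNReal.ofReal t < f x} := Measure.prod_apply_symm hS

-- The translates `A + min B` and `max A + B` lie in `A + B` and meet in a single point.
lemma volume_add_volume_le_volume_add_of_isCompact {A B : Set ℝ} (hA : IsCompact A)
    (hB : IsCompact B) (hAne : A.Nonempty) (hBne : B.Nonempty) :
    volume A + volume B ≤ volume (A + B) := by
  obtain ⟨a, ha, ha_max⟩ := hA.exists_isGreatest hAne
  obtain ⟨b, hb, hb_min⟩ := hB.exists_isLeast hBne
  have hdisj : AEDisjoint volume ((· + b) '' A) ((a + ·) '' B) := by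
    refine measure_mono_null (t := {a + b}) ?_ (by simp)
    rintro _ ⟨⟨x, hx, rfl⟩, ⟨y, hy, hxy⟩⟩
    exact le_antisymm (add_le_add_left (ha_max hx) b) (hxy ▸ add_le_add_right (hb_min hy) a)
  calc volume A + volume B = volume ((· + b) '' A) + volume ((a + ·) '' B) := by
        rw [Set.image_add_right, measure_preimage_add_right, Set.image_add_left,
          measure_preimage_add]
    _ = volume ((· + b) '' A ∪ (a + ·) '' B) :=
        (measure_union₀ (hB.image (by fun_prop)).measurableSet.nullMeasurableSet hdisj).symm
    _ ≤ volume (A + B) := measure_mono <| Set.union_subset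
        (Set.image_subset_iff.2 fun x hx => Set.add_mem_add hx hb)
        (Set.image_subset_iff.2 fun y hy => Set.add_mem_add ha hy)

lemma measure_eq_iSup_isCompact_nonempty {X : Type*} [TopologicalSpace X] [MeasurableSpace X]
    (μ : Measure X) [μ.InnerRegular] {A : Set X} (hA : MeasurableSet A) (hAne : A.Nonempty) :
    μ A = ⨆ K ∈ {K | K ⊆ A ∧ IsCompact K ∧ K.Nonempty}, μ K := by
  obtain ⟨x, hx⟩ := hAne
  refine le_antisymm ?_ (iSup₂_le fun K hK => measure_mono hK.1)
  rw [hA.measure_eq_iSup_isCompact]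
  exact iSup₂_le fun K hKA => iSup_le fun hK => (measure_mono (Set.subset_insert x K)).trans <|
    le_iSup₂_of_le (insert x K)
      ⟨Set.insert_subset hx hKA, hK.insert x, Set.insert_nonempty x K⟩ le_rfl

lemma volume_add_volume_le_volume_add {A B : Set ℝ} (hA : MeasurableSet A)
    (hB : MeasurableSet B) (hAne : A.Nonempty) (hBne : B.Nonempty) :
    volume A + volume B ≤ volume (A + B) := by
  rw [measure_eq_iSup_isCompact_nonempty volume hA hAne,
    measure_eq_iSup_isCompact_nonempty volume hB hBne]
  refine ENNReal.biSup_add_biSup_le ?_ ?_ fun K hK L hL =>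
    (volume_add_volume_le_volume_add_of_isCompact hK.2.1 hL.2.1 hK.2.2 hL.2.2).trans
      (measure_mono (Set.add_subset_add hK.1 hL.1))
  · exact ⟨{hAne.some}, by simp [hAne.some_mem]⟩
  · exact ⟨{hBne.some}, by simp [hBne.some_mem]⟩

lemma ofReal_mul_volume_add_le_volume_smul_add_smul {a b : ℝ} (ha : 0 < a) (hb : 0 < b)
    {A B : Set ℝ} (hA : MeasurableSet A) (hB : MeasurableSet B) (hAne : A.Nonempty)
    (hBne : B.Nonempty) :
    ENNReal.ofReal a * volume A + ENNReal.ofReal b * volume B ≤ volume (a • A + b • B) := by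
  simpa [Measure.addHaar_smul, abs_of_pos ha, abs_of_pos hb] using
    volume_add_volume_le_volume_add (hA.const_smul₀ a) (hB.const_smul₀ b) hAne.smul_set
      hBne.smul_set

lemma ennreal_rpow_mul_rpow_le_add {a b : ℝ} (ha : 0 < a) (hb : 0 < b) (hab : a + b = 1)
    (u v : ℝ≥0∞) : u ^ a * v ^ b ≤ ENNReal.ofReal a * u + ENNReal.ofReal b * v := by
  obtain rfl | hu := eq_or_ne u ⊤
  · simp [ENNReal.mul_top, ha]
  obtain rfl | hv := eq_or_ne v ⊤
  · simp [ENNReal.mul_top, hb]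
  lift u to ℝ≥0 using hu
  lift v to ℝ≥0 using hv
  lift a to ℝ≥0 using ha.le
  lift b to ℝ≥0 using hb.le
  have hamgm := NNReal.geom_mean_le_arith_mean2_weighted a b u v (by exact_mod_cast hab)
  rw [← ENNReal.coe_rpow_of_nonneg u a.coe_nonneg, ← ENNReal.coe_rpow_of_nonneg v b.coe_nonneg,
    ENNReal.ofReal_coe_nnreal, ENNReal.ofReal_coe_nnreal]
  exact_mod_cast hamgm

/-- The Prékopa–Leindler inequality for the measure `μ`. It is a predicate so that it can be
transported along linear maps and products, which reduces the case of Haar measures to that of the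
real line. -/
def PrekopaLeindler {E : Type*} [AddCommGroup E] [Module ℝ E] [MeasurableSpace E]
    (μ : Measure E) : Prop :=
  ∀ ⦃a b : ℝ⦄, 0 < a → 0 < b → a + b = 1 → ∀ ⦃f g h : E → ℝ≥0∞⦄,
    Measurable f → Measurable g → Measurable h →
    (∀ x y, f x ^ a * g y ^ b ≤ h (a • x + b • y)) →
      (∫⁻ x, f x ∂μ) ^ a * (∫⁻ x, g x ∂μ) ^ b ≤ ∫⁻ x, h x ∂μ

section Line

variable {a b : ℝ} {f g h : ℝ → ℝ≥0∞}

lemma lintegral_add_le_of_iSup_eq_one (ha : 0 < a) (hb : 0 < b) (hab : a + b = 1)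
    (hf : Measurable f) (hg : Measurable g) (hh : Measurable h)
    (hfgh : ∀ x y, f x ^ a * g y ^ b ≤ h (a • x + b • y)) (hf1 : ⨆ x, f x = 1)
    (hg1 : ⨆ x, g x = 1) :
    ENNReal.ofReal a * (∫⁻ x, f x) + ENNReal.ofReal b * (∫⁻ x, g x) ≤ ∫⁻ x, h x := by
  have hmeas (k : ℝ → ℝ≥0∞) : Measurable fun t : ℝ => volume {x | ENNReal.ofReal t < k x} :=
    Antitone.measurable fun s t hst => measure_mono fun x (hx : _ < _) =>
      (ENNReal.ofReal_le_ofReal hst).trans_lt hx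
  rw [lintegral_eq_lintegral_meas_ofReal_lt _ hf, lintegral_eq_lintegral_meas_ofReal_lt _ hg,
    lintegral_eq_lintegral_meas_ofReal_lt _ hh, ← lintegral_const_mul _ (hmeas f),
    ← lintegral_const_mul _ (hmeas g), ← lintegral_add_left ((hmeas f).const_mul _)]
  refine setLIntegral_mono' measurableSet_Ioi fun t _ => ?_
  rcases lt_or_ge (ENNReal.ofReal t) 1 with ht | ht
  · have hne (k : ℝ → ℝ≥0∞) (hk : ⨆ x, k x = 1) : {x | ENNReal.ofReal t < k x}.Nonempty :=
      lt_iSup_iff.1 (ht.trans_eq hk.symm)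
    refine (ofReal_mul_volume_add_le_volume_smul_add_smul ha hb
      (measurableSet_lt measurable_const hf) (measurableSet_lt measurable_const hg)
      (hne f hf1) (hne g hg1)).trans (measure_mono ?_)
    rintro _ ⟨_, ⟨x, hx, rfl⟩, _, ⟨y, hy, rfl⟩, rfl⟩
    calc ENNReal.ofReal t = ENNReal.ofReal t ^ a * ENNReal.ofReal t ^ b := by
          rw [← ENNReal.rpow_add_of_nonneg _ _ ha.le hb.le, hab, ENNReal.rpow_one]
      _ < f x ^ a * g y ^ b :=
          ENNReal.mul_lt_mul (ENNReal.rpow_lt_rpow hx ha) (ENNReal.rpow_lt_rpow hy hb)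
      _ ≤ h (a • x + b • y) := hfgh x y
  · have hempty (k : ℝ → ℝ≥0∞) (hk : ⨆ x, k x = 1) : {x | ENNReal.ofReal t < k x} = ∅ :=
      Set.eq_empty_of_forall_notMem fun x hx =>
        (hx.trans_le ((le_iSup k x).trans hk.le)).not_ge ht
    simp [hempty f hf1, hempty g hg1]

lemma ennreal_div_rpow_mul_div_rpow (ha : 0 < a) (hb : 0 < b) (u v : ℝ≥0∞) {s t : ℝ≥0∞}
    (hs0 : s ≠ 0) (hs : s ≠ ⊤) :
    (u / s) ^ a * (v / t) ^ b = u ^ a * v ^ b / (s ^ a * t ^ b) := by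
  rw [ENNReal.div_rpow_of_nonneg _ _ ha.le, ENNReal.div_rpow_of_nonneg _ _ hb.le]
  simp only [div_eq_mul_inv]
  rw [ENNReal.mul_inv (.inl (by simp [hs0, hs])) (.inl (by simp [ha.le, hs]))]
  ring

lemma rpow_lintegral_mul_le_of_iSup_ne_top (ha : 0 < a) (hb : 0 < b) (hab : a + b = 1)
    (hf : Measurable f) (hg : Measurable g) (hh : Measurable h)
    (hfgh : ∀ x y, f x ^ a * g y ^ b ≤ h (a • x + b • y)) (hf_top : ⨆ x, f x ≠ ⊤)
    (hg_top : ⨆ x, g x ≠ ⊤) :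
    (∫⁻ x, f x) ^ a * (∫⁻ x, g x) ^ b ≤ ∫⁻ x, h x := by
  set s := ⨆ x, f x
  set t := ⨆ x, g x
  by_cases hs0 : s = 0
  · simp [show f = 0 from funext fun x => le_zero_iff.1 (hs0 ▸ le_iSup f x), ha]
  by_cases ht0 : t = 0
  · simp [show g = 0 from funext fun x => le_zero_iff.1 (ht0 ▸ le_iSup g x), hb]
  have hc0 : s ^ a * t ^ b ≠ 0 := by simp [hs0, ht0, hf_top, hg_top]
  have hc : s ^ a * t ^ b ≠ ⊤ := ENNReal.mul_ne_top (by simp [ha.le, hf_top])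
    (by simp [hb.le, hg_top])
  have hdiv {k : ℝ → ℝ≥0∞} (hk : Measurable k) (r : ℝ≥0∞) :
      ∫⁻ x, k x / r = (∫⁻ x, k x) / r := by
    simp only [div_eq_mul_inv, lintegral_mul_const _ hk]
  have hnorm : ENNReal.ofReal a * (∫⁻ x, f x / s) + ENNReal.ofReal b * (∫⁻ x, g x / t)
      ≤ ∫⁻ x, h x / (s ^ a * t ^ b) :=
    lintegral_add_le_of_iSup_eq_one ha hb hab (hf.div_const s) (hg.div_const t) (hh.div_const _)
      (fun x y => by
        rw [ennreal_div_rpow_mul_div_rpow ha hb _ _ hs0 hf_top]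
        exact ENNReal.div_le_div_right (hfgh x y) _)
      (by rw [← ENNReal.iSup_div, ENNReal.div_self hs0 hf_top])
      (by rw [← ENNReal.iSup_div, ENNReal.div_self ht0 hg_top])
  rw [hdiv hf, hdiv hg, hdiv hh] at hnorm
  have hamgm := (ennreal_rpow_mul_rpow_le_add ha hb hab _ _).trans hnorm
  rwa [ennreal_div_rpow_mul_div_rpow ha hb _ _ hs0 hf_top, ENNReal.div_le_iff hc0 hc,
    ENNReal.div_mul_cancel hc0 hc] at hamgm

lemma tendsto_lintegral_min_natCast {α : Type*} [MeasurableSpace α] (μ : Measure α)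
    {f : α → ℝ≥0∞} (hf : Measurable f) :
    Filter.Tendsto (fun n : ℕ => ∫⁻ x, min (f x) n ∂μ) Filter.atTop (nhds (∫⁻ x, f x ∂μ)) := by
  refine lintegral_tendsto_of_tendsto_of_monotone
    (fun n => (hf.min measurable_const).aemeasurable)
    (.of_forall fun x i j hij => min_le_min le_rfl (by exact_mod_cast hij))
    (.of_forall fun x => ?_)
  simpa using (tendsto_const_nhds (x := f x)).min ENNReal.tendsto_nat_nhds_top

theorem prekopaLeindler_volume_real : PrekopaLeindler (volume : Measure ℝ) := by
  intro a b ha hb hab f g h hf hg hh hfgh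
  by_cases hf0 : ∫⁻ x, f x = 0
  · simp [hf0, ha]
  by_cases hg0 : ∫⁻ x, g x = 0
  · simp [hg0, hb]
  have hlim : Filter.Tendsto
      (fun n : ℕ => (∫⁻ x, min (f x) n) ^ a * (∫⁻ x, min (g x) n) ^ b)
      Filter.atTop (nhds ((∫⁻ x, f x) ^ a * (∫⁻ x, g x) ^ b)) :=
    ENNReal.Tendsto.mul
      ((ENNReal.continuous_rpow_const.tendsto _).comp (tendsto_lintegral_min_natCast _ hf))
      (.inl (by simp [ENNReal.rpow_eq_zero_iff, hf0, not_lt.2 ha.le]))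
      ((ENNReal.continuous_rpow_const.tendsto _).comp (tendsto_lintegral_min_natCast _ hg))
      (.inl (by simp [ENNReal.rpow_eq_zero_iff, hg0, not_lt.2 hb.le]))
  have hbdd (k : ℝ → ℝ≥0∞) (n : ℕ) : ⨆ x, min (k x) (n : ℝ≥0∞) ≠ ⊤ :=
    ne_top_of_le_ne_top (ENNReal.natCast_ne_top n) (iSup_le fun x => min_le_right _ _)
  refine le_of_tendsto' hlim fun n => rpow_lintegral_mul_le_of_iSup_ne_top ha hb hab
    (hf.min measurable_const) (hg.min measurable_const) hh (fun x y => ?_) (hbdd f n) (hbdd g n)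
  exact (mul_le_mul' (ENNReal.rpow_le_rpow (min_le_left _ _) ha.le)
    (ENNReal.rpow_le_rpow (min_le_left _ _) hb.le)).trans (hfgh x y)

end Line

namespace PrekopaLeindler

section Algebraic

variable {E F : Type*} [AddCommGroup E] [Module ℝ E] [MeasurableSpace E]
  [AddCommGroup F] [Module ℝ F] [MeasurableSpace F]

lemma prod {μ : Measure E} {ν : Measure F} [SFinite ν] (hμ : PrekopaLeindler μ)
    (hν : PrekopaLeindler ν) : PrekopaLeindler (μ.prod ν) := by
  intro a b ha hb hab f g h hf hg hh hfgh
  rw [lintegral_prod _ hf.aemeasurable, lintegral_prod _ hg.aemeasurable,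
    lintegral_prod _ hh.aemeasurable]
  exact hμ ha hb hab hf.lintegral_prod_right' hg.lintegral_prod_right' hh.lintegral_prod_right'
    fun x x' => hν ha hb hab (hf.comp measurable_prodMk_left) (hg.comp measurable_prodMk_left)
      (hh.comp measurable_prodMk_left) fun y y' => hfgh (x, y) (x', y')

lemma map {μ : Measure E} (hμ : PrekopaLeindler μ) {L : E →ₗ[ℝ] F} (hL : Measurable L) :
    PrekopaLeindler (μ.map L) := by
  intro a b ha hb hab f g h hf hg hh hfgh
  rw [lintegral_map hf hL, lintegral_map hg hL, lintegral_map hh hL]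
  exact hμ ha hb hab (hf.comp hL) (hg.comp hL) (hh.comp hL) fun x y => by
    simpa using hfgh (L x) (L y)

lemma smul {μ : Measure E} (hμ : PrekopaLeindler μ) (c : ℝ≥0) : PrekopaLeindler (c • μ) := by
  intro a b ha hb hab f g h hf hg hh hfgh
  have hc : (c : ℝ≥0∞) ^ a * (c : ℝ≥0∞) ^ b = c := by
    rw [← ENNReal.rpow_add_of_nonneg _ _ ha.le hb.le, hab, ENNReal.rpow_one]
  simp only [lintegral_smul_measure, ENNReal.smul_def, smul_eq_mul]
  rw [ENNReal.mul_rpow_of_nonneg _ _ ha.le, ENNReal.mul_rpow_of_nonneg _ _ hb.le,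
    mul_mul_mul_comm, hc]
  gcongr
  exact hμ ha hb hab hf hg hh hfgh

end Algebraic

variable {E F : Type*} [NormedAddCommGroup E] [NormedSpace ℝ E] [MeasurableSpace E] [BorelSpace E]
  [NormedAddCommGroup F] [NormedSpace ℝ F] [FiniteDimensional ℝ F] [MeasurableSpace F]
  [BorelSpace F]

lemma of_continuousLinearEquiv {μ : Measure E} [μ.IsAddHaarMeasure] (hμ : PrekopaLeindler μ)
    (L : E ≃L[ℝ] F) (ν : Measure F) [ν.IsAddHaarMeasure] : PrekopaLeindler ν := by
  have := L.isAddHaarMeasure_map μ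
  rw [Measure.isAddLeftInvariant_eq_smul ν (μ.map L)]
  exact (hμ.map (L := (L : E →ₗ[ℝ] F)) L.continuous.measurable).smul _

end PrekopaLeindler

lemma prekopaLeindler_volume_pi (n : ℕ) : PrekopaLeindler (volume : Measure (Fin n → ℝ)) := by
  induction n with
  | zero =>
    intro a b _ _ _ f g h _ _ _ hfgh
    rw [Measure.volume_pi_eq_dirac 0, lintegral_dirac, lintegral_dirac, lintegral_dirac]
    simpa using hfgh 0 0
  | succ n ih =>
    refine (prekopaLeindler_volume_real.prod ih).of_continuousLinearEquiv
      (ContinuousLinearEquiv.ofFinrankEq ?_) volume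
    simp [add_comm]

theorem prekopaLeindler_of_isAddHaarMeasure {E : Type*} [NormedAddCommGroup E] [NormedSpace ℝ E]
    [FiniteDimensional ℝ E] [MeasurableSpace E] [BorelSpace E] (μ : Measure E)
    [μ.IsAddHaarMeasure] : PrekopaLeindler μ :=
  (prekopaLeindler_volume_pi (Module.finrank ℝ E)).of_continuousLinearEquiv
    (ContinuousLinearEquiv.ofFinrankEq (by simp)) μ

end PrekopaLeindler

section SupportingFunctional

variable {E : Type*} [NormedAddCommGroup E] [NormedSpace ℝ E] [FiniteDimensional ℝ E]

lemma exists_continuousLinearMap_le_of_concaveOn {s : Set E} {f : E → ℝ} (hs : IsOpen s)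
    (hf : ConcaveOn ℝ s f) {x₀ : E} (hx₀ : x₀ ∈ s) :
    ∃ l : E →L[ℝ] ℝ, ∀ x ∈ s, f x ≤ f x₀ + l (x - x₀) := by
  have hopen : IsOpen {p : E × ℝ | p.1 ∈ s ∧ p.2 < f p.1} := by
    have hcont : ContinuousOn (fun p : E × ℝ => f p.1 - p.2) (s ×ˢ Set.univ) :=
      ((hf.continuousOn hs).comp continuousOn_fst fun p hp => hp.1).sub continuousOn_snd
    simpa [Set.ext_iff, Set.inter_def] using
      hcont.isOpen_inter_preimage (hs.prod isOpen_univ) (isOpen_Ioi (a := (0 : ℝ)))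
  obtain ⟨φ, hφ⟩ := geometric_hahn_banach_open_point hf.convex_strict_hypograph hopen
    (x := (x₀, f x₀)) (by simp)
  have hφ_apply (x : E) (r : ℝ) : φ (x, r) = φ (x, 0) + r * φ (0, 1) := by
    rw [← smul_eq_mul, ← map_smul, ← map_add]
    simp
  have hc : 0 < φ (0, 1) := by
    have hbelow := hφ (x₀, f x₀ - 1) ⟨hx₀, by simp⟩
    rw [hφ_apply, hφ_apply x₀ (f x₀)] at hbelow
    linarith
  refine ⟨-(φ (0, 1))⁻¹ • φ.comp (.inl ℝ E ℝ), fun x hx => le_of_forall_lt fun r hr => ?_⟩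
  have hsep := hφ (x, r) ⟨hx, hr⟩
  rw [hφ_apply, hφ_apply x₀] at hsep
  have hlin : φ (x - x₀, 0) = φ (x, 0) - φ (x₀, 0) := by rw [← map_sub]; simp
  have : r < f x₀ - (φ (0, 1))⁻¹ * (φ (x, 0) - φ (x₀, 0)) := by
    field_simp
    linarith
  simpa only [smul_apply, ContinuousLinearMap.comp_apply,
    ContinuousLinearMap.inl_apply, hlin, smul_eq_mul, neg_mul, ← sub_eq_add_neg] using this

end SupportingFunctional

namespace IsLogConcaveFn

section Algebraic

variable {E F : Type*} [AddCommGroup E] [Module ℝ E] [AddCommGroup F] [Module ℝ F] {w : E → ℝ}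

lemma nonneg (hw : IsLogConcaveFn w) (x : E) : 0 ≤ w x := hw.1 x

lemma rpow_mul_rpow_le (hw : IsLogConcaveFn w) {a b : ℝ} (ha : 0 ≤ a) (hb : 0 ≤ b)
    (hab : a + b = 1) (x y : E) : w x ^ a * w y ^ b ≤ w (a • x + b • y) := by
  obtain rfl : b = 1 - a := by linarith
  exact hw.2 x y a ha (by linarith)

lemma comp_linearMap (hw : IsLogConcaveFn w) (L : F →ₗ[ℝ] E) : IsLogConcaveFn fun x => w (L x) :=
  ⟨fun x => hw.nonneg (L x), fun x y l hl hl' => by simpa using hw.2 (L x) (L y) l hl hl'⟩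

lemma convex_superlevel (hw : IsLogConcaveFn w) {c : ℝ} (hc : 0 < c) :
    Convex ℝ {x | c ≤ w x} := by
  intro x hx y hy a b ha hb hab
  calc c = c ^ a * c ^ b := by rw [← rpow_add hc, hab, rpow_one]
    _ ≤ w x ^ a * w y ^ b := mul_le_mul (rpow_le_rpow hc.le hx ha) (rpow_le_rpow hc.le hy hb)
        (by positivity) (rpow_nonneg (hw.nonneg x) a)
    _ ≤ w (a • x + b • y) := hw.rpow_mul_rpow_le ha hb hab x y

lemma convex_pos (hw : IsLogConcaveFn w) : Convex ℝ {x | 0 < w x} :=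
  fun _ hx _ hy _ _ ha hb hab =>
    (mul_pos (rpow_pos_of_pos hx _) (rpow_pos_of_pos hy _)).trans_le
      (hw.rpow_mul_rpow_le ha hb hab _ _)

lemma concaveOn_log (hw : IsLogConcaveFn w) : ConcaveOn ℝ {x | 0 < w x} fun x => log (w x) := by
  refine ⟨hw.convex_pos, fun x (hx : 0 < w x) y (hy : 0 < w y) a b ha hb hab => ?_⟩
  calc a • log (w x) + b • log (w y) = log (w x ^ a * w y ^ b) := by
        rw [log_mul (by positivity) (by positivity), log_rpow hx, log_rpow hy, smul_eq_mul,
          smul_eq_mul]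
    _ ≤ log (w (a • x + b • y)) :=
        log_le_log (by positivity) (hw.rpow_mul_rpow_le ha hb hab x y)

end Algebraic

section FiniteDimensional

variable {E : Type*} [NormedAddCommGroup E] [NormedSpace ℝ E] [FiniteDimensional ℝ E] {w : E → ℝ}

theorem exists_le_mul_exp (hw : IsLogConcaveFn w) {x₀ : E} (hx₀ : x₀ ∈ interior {x | 0 < w x}) :
    ∃ l : E →L[ℝ] ℝ, ∀ x, w x ≤ w x₀ * exp (l (x - x₀)) := by
  obtain ⟨l, hl⟩ := exists_continuousLinearMap_le_of_concaveOn isOpen_interior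
    (hw.concaveOn_log.subset interior_subset hw.convex_pos.interior) hx₀
  have hw₀ : 0 < w x₀ := interior_subset (s := {x | 0 < w x}) hx₀
  refine ⟨l, fun x => ?_⟩
  obtain hx | hx := (hw.nonneg x).eq_or_lt
  · rw [← hx]; positivity
  -- The midpoint of `x` and `x₀` is interior even when `x` is not.
  have hmid : (1 / 2 : ℝ) • x₀ + (1 / 2 : ℝ) • x ∈ interior {x | 0 < w x} :=
    hw.convex_pos.combo_interior_self_mem_interior hx₀ hx one_half_pos
      one_half_pos.le (add_halves 1)
  have hconc := hw.concaveOn_log.2 hw₀ hx one_half_pos.le one_half_pos.le (add_halves 1)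
  have hsub : (1 / 2 : ℝ) • x₀ + (1 / 2 : ℝ) • x - x₀ = (1 / 2 : ℝ) • (x - x₀) := by module
  have hl_mid := hl _ hmid
  rw [hsub, map_smul] at hl_mid
  simp only [smul_eq_mul] at hconc hl_mid
  rw [← log_le_log_iff hx (by positivity), log_mul hw₀.ne' (exp_ne_zero _), log_exp]
  linarith

lemma continuousOn_interior_pos (hw : IsLogConcaveFn w) :
    ContinuousOn w (interior {x | 0 < w x}) :=
  (continuous_exp.comp_continuousOn hw.concaveOn_log.continuousOn_interior).congr
    fun _ hx => (exp_log (interior_subset (s := {x | 0 < w x}) hx)).symm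

lemma measurable [MeasurableSpace E] [BorelSpace E] (hw : IsLogConcaveFn w)
    (hpos : IsOpen {x | 0 < w x}) : Measurable w := by
  have hcont := hpos.interior_eq ▸ hw.continuousOn_interior_pos
  classical
  have hpiece : Set.piecewise {x | 0 < w x} w (fun _ => 0) = w := by
    refine funext fun x => ?_
    by_cases hx : 0 < w x
    · simp [hx]
    · simpa [hx] using (hw.nonneg x).antisymm (not_lt.1 hx)
  exact hpiece ▸ hcont.measurable_piecewise continuousOn_const hpos.measurableSet

section Measure

variable [MeasurableSpace E] [BorelSpace E] (μ : Measure E) [μ.IsAddHaarMeasure]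

lemma withDensity_rpow_mul_le (hw : IsLogConcaveFn w) (hwm : Measurable w) {a b : ℝ}
    (ha : 0 < a) (hb : 0 < b) (hab : a + b = 1) {A B C : Set E} (hA : MeasurableSet A)
    (hB : MeasurableSet B) (hC : MeasurableSet C) (hABC : a • A + b • B ⊆ C) :
    μ.withDensity (fun x => .ofReal (w x)) A ^ a * μ.withDensity (fun x => .ofReal (w x)) B ^ b
      ≤ μ.withDensity (fun x => .ofReal (w x)) C := by
  have hm : Measurable fun x => ENNReal.ofReal (w x) := hwm.ennreal_ofReal
  simp only [withDensity_apply, hA, hB, hC, ← lintegral_indicator]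
  refine prekopaLeindler_of_isAddHaarMeasure μ ha hb hab (hm.indicator hA) (hm.indicator hB)
    (hm.indicator hC) fun x y => ?_
  by_cases hx : x ∈ A
  swap
  · simp [hx, ha]
  by_cases hy : y ∈ B
  swap
  · simp [hy, hb]
  have hxy : a • x + b • y ∈ C :=
    hABC (Set.add_mem_add (Set.smul_mem_smul_set hx) (Set.smul_mem_smul_set hy))
  rw [Set.indicator_of_mem hx, Set.indicator_of_mem hy, Set.indicator_of_mem hxy,
    ENNReal.ofReal_rpow_of_nonneg (hw.nonneg x) ha.le,
    ENNReal.ofReal_rpow_of_nonneg (hw.nonneg y) hb.le,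
    ← ENNReal.ofReal_mul (rpow_nonneg (hw.nonneg x) a)]
  exact ENNReal.ofReal_le_ofReal (hw.rpow_mul_rpow_le ha.le hb.le hab x y)

lemma real_withDensity_halfSpace (hw : IsLogConcaveFn w) (hwm : Measurable w)
    (hwi : Integrable w μ) (l : E →L[ℝ] ℝ) :
    IsLogConcaveFn fun t => (μ.withDensity fun x => .ofReal (w x)).real {x | t ≤ l x} := by
  have := isFiniteMeasure_withDensity_ofReal hwi.2
  refine ⟨fun t => measureReal_nonneg, fun s t a ha ha1 => ?_⟩
  obtain rfl | ha0 := ha.eq_or_lt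
  · simp
  obtain rfl | ha1 := ha1.eq_or_lt
  · simp
  have hm (r : ℝ) : MeasurableSet {x | r ≤ l x} := measurableSet_le measurable_const l.measurable
  have hpl := hw.withDensity_rpow_mul_le μ hwm ha0 (sub_pos.2 ha1) (by ring) (hm s) (hm t)
    (hm (a • s + (1 - a) • t)) (by
      rintro _ ⟨_, ⟨x, hx, rfl⟩, _, ⟨y, hy, rfl⟩, rfl⟩
      simpa using add_le_add (mul_le_mul_of_nonneg_left hx ha0.le)
        (mul_le_mul_of_nonneg_left hy (sub_pos.2 ha1).le))
  simpa only [measureReal_def, ENNReal.toReal_mul, ENNReal.toReal_rpow] using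
    ENNReal.toReal_mono (measure_ne_top _ _) hpl

end Measure

end FiniteDimensional

end IsLogConcaveFn

section Decay

lemma ball_midpoint_subset_sdiff_closedBall {E : Type*} [NormedAddCommGroup E] [NormedSpace ℝ E]
    {s : Set E} (hs : Convex ℝ s) {x₀ x : E} {r R : ℝ}
    (hball : Metric.ball x₀ r ⊆ s) (hx : x ∈ s) (hdist : 2 * R + r < dist x x₀) :
    Metric.ball ((1 / 2 : ℝ) • x₀ + (1 / 2 : ℝ) • x) (r / 2) ⊆ s \ Metric.closedBall x₀ R := by
  intro z hz
  have hreflect : ‖(2 : ℝ) • z - x - x₀‖ < r := by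
    have hscale : (2 : ℝ) • z - x - x₀ =
        (2 : ℝ) • (z - ((1 / 2 : ℝ) • x₀ + (1 / 2 : ℝ) • x)) := by module
    rw [Metric.mem_ball, dist_eq_norm] at hz
    rw [hscale, norm_smul, norm_of_nonneg zero_le_two]
    linarith
  have hzs : (1 / 2 : ℝ) • ((2 : ℝ) • z - x) + (1 / 2 : ℝ) • x ∈ s :=
    hs (hball (mem_ball_iff_norm.2 hreflect)) hx one_half_pos.le one_half_pos.le (add_halves 1)
  refine ⟨by convert hzs using 1; module, fun hzR => ?_⟩
  rw [mem_closedBall_iff_norm] at hzR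
  have hsum : x - x₀ = (2 : ℝ) • (z - x₀) - ((2 : ℝ) • z - x - x₀) := by module
  have htri := norm_sub_le ((2 : ℝ) • (z - x₀)) ((2 : ℝ) • z - x - x₀)
  rw [← hsum, norm_smul, norm_of_nonneg zero_le_two] at htri
  rw [dist_eq_norm] at hdist
  linarith

variable {E : Type*} [NormedAddCommGroup E] [NormedSpace ℝ E] [MeasurableSpace E] [BorelSpace E]

-- Otherwise there are points `x` of `s` arbitrarily far from the center `x₀` of a ball in `s`, and
-- balls of a fixed radius around the midpoints of `x₀` and `x` lie in `s` and escape to infinity.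
lemma isBounded_of_convex_of_measure_ne_top (μ : Measure E) [μ.IsAddHaarMeasure] {s : Set E}
    (hs : Convex ℝ s) (hsm : MeasurableSet s) (hint : (interior s).Nonempty) (hμs : μ s ≠ ⊤) :
    Bornology.IsBounded s := by
  obtain ⟨x₀, hx₀⟩ := hint
  obtain ⟨r, hr, hball⟩ := Metric.isOpen_iff.1 isOpen_interior x₀ hx₀
  by_contra hunbdd
  have hmass (n : ℕ) : μ (Metric.ball 0 (r / 2)) ≤ μ (s \ Metric.closedBall x₀ n) := by
    obtain ⟨x, hx, hxn⟩ : ∃ x ∈ s, 2 * n + r < dist x x₀ := by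
      by_contra! hle
      exact hunbdd ((Metric.isBounded_closedBall (x := x₀) (r := 2 * n + r)).subset hle)
    rw [← Measure.addHaar_ball_center μ ((1 / 2 : ℝ) • x₀ + (1 / 2 : ℝ) • x)]
    exact measure_mono (ball_midpoint_subset_sdiff_closedBall hs
      (hball.trans interior_subset) hx hxn)
  have hlim : Filter.Tendsto (fun n : ℕ => μ (s \ Metric.closedBall x₀ n)) Filter.atTop
      (nhds (μ (⋂ n : ℕ, s \ Metric.closedBall x₀ n))) :=
    tendsto_measure_iInter_atTop
      (fun n => (hsm.diff measurableSet_closedBall).nullMeasurableSet)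
      (fun m n hmn => Set.sdiff_subset_sdiff_right
        (Metric.closedBall_subset_closedBall (by exact_mod_cast hmn)))
      ⟨0, measure_ne_top_of_subset Set.sdiff_subset hμs⟩
  have hempty : ⋂ n : ℕ, s \ Metric.closedBall x₀ n = ∅ := by
    refine Set.eq_empty_of_forall_notMem fun x hx => ?_
    obtain ⟨n, hn⟩ := exists_nat_ge (dist x x₀)
    exact (Set.mem_iInter.1 hx n).2 hn
  rw [hempty, measure_empty] at hlim
  exact (Metric.measure_ball_pos μ 0 (half_pos hr)).not_ge
    (ge_of_tendsto' hlim hmass)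

end Decay

namespace IsLogConcaveFn

lemma le_mul_exp_neg_of_superlevel_subset_ball {E : Type*} [NormedAddCommGroup E]
    [NormedSpace ℝ E] {w : E → ℝ} (hw : IsLogConcaveFn w) {x₀ : E} {ρ : ℝ}
    (hw₀ : 0 < w x₀) (hρ : 0 < ρ) (hball : {x | w x₀ * exp (-1) ≤ w x} ⊆ Metric.ball x₀ ρ) {x : E}
    (hx : ρ ≤ ‖x - x₀‖) : w x ≤ w x₀ * exp (-(‖x - x₀‖ / ρ)) := by
  obtain hwx | hwx := (hw.nonneg x).eq_or_lt
  · rw [← hwx]; positivity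
  have hR : 0 < ‖x - x₀‖ := hρ.trans_le hx
  set t := ρ / ‖x - x₀‖ with ht
  have ht1 : t ≤ 1 := (div_le_one hR).2 hx
  have hmem : t • x + (1 - t) • x₀ ∉ {x | w x₀ * exp (-1) ≤ w x} := fun h => by
    have hdist := hball h
    have hsub : t • x + (1 - t) • x₀ - x₀ = t • (x - x₀) := by module
    rw [Metric.mem_ball, dist_eq_norm, hsub, norm_smul, ht, norm_of_nonneg (by positivity),
      div_mul_cancel₀ _ hR.ne'] at hdist
    exact hdist.false
  have hlog := hw.concaveOn_log.2 hwx hw₀ (by positivity) (sub_nonneg.2 ht1) (by ring : t + _ = 1)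
  have hpos : 0 < w (t • x + (1 - t) • x₀) :=
    hw.convex_pos hwx hw₀ (by positivity) (sub_nonneg.2 ht1) (by ring)
  have hlt := log_lt_log hpos (not_le.1 hmem)
  rw [log_mul hw₀.ne' (exp_ne_zero _), log_exp] at hlt
  simp only [smul_eq_mul] at hlog
  rw [← log_le_log_iff hwx (by positivity), log_mul hw₀.ne' (exp_ne_zero _), log_exp]
  have : t * (log (w x) - log (w x₀)) ≤ -1 := by linarith
  rw [ht, div_mul_eq_mul_div, div_le_iff₀ hR] at this
  rw [← sub_le_iff_le_add', ← neg_div, le_div_iff₀ hρ]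
  linarith

section Decay

variable {E : Type*} [NormedAddCommGroup E] [NormedSpace ℝ E] [FiniteDimensional ℝ E]
  [MeasurableSpace E] [BorelSpace E] {μ : Measure E} [μ.IsAddHaarMeasure] {w : E → ℝ}

lemma isBounded_superlevel (hw : IsLogConcaveFn w) (hwm : Measurable w) (hwi : Integrable w μ)
    {x₀ : E} (hx₀ : x₀ ∈ interior {x | 0 < w x}) {c : ℝ} (hc : 0 < c) (hcw : c < w x₀) :
    Bornology.IsBounded {x | c ≤ w x} := by
  have hnhds : {x | c ≤ w x} ∈ nhds x₀ :=
    ((hw.continuousOn_interior_pos.continuousAt (isOpen_interior.mem_nhds hx₀)).eventually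
      (lt_mem_nhds hcw)).mono fun _ => le_of_lt
  exact isBounded_of_convex_of_measure_ne_top μ (hw.convex_superlevel hc)
    (measurableSet_le measurable_const hwm) ⟨x₀, mem_interior_iff_mem_nhds.2 hnhds⟩
    (hwi.measure_ge_lt_top hc).ne

theorem exists_le_mul_exp_neg_norm (hw : IsLogConcaveFn w) (hwm : Measurable w)
    (hwi : Integrable w μ) (hint : (interior {x | 0 < w x}).Nonempty) :
    ∃ C b : ℝ, 0 < b ∧ ∀ x, w x ≤ C * exp (-b * ‖x‖) := by
  obtain ⟨x₀, hx₀⟩ := hint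
  have hw₀ : 0 < w x₀ := interior_subset (s := {x | 0 < w x}) hx₀
  have hlt : w x₀ * exp (-1) < w x₀ := mul_lt_of_lt_one_right hw₀ (by simp)
  obtain ⟨ρ, hρ, hball⟩ := (hw.isBounded_superlevel hwm hwi hx₀ (by positivity) hlt).subset_ball_lt
    0 x₀
  obtain ⟨l, hl⟩ := hw.exists_le_mul_exp hx₀
  have hcenter (x : E) : w x ≤ w x₀ * exp (‖l‖ * ρ + 1 - ‖x - x₀‖ / ρ) := by
    rcases le_or_gt ρ ‖x - x₀‖ with hx | hx
    · refine (hw.le_mul_exp_neg_of_superlevel_subset_ball hw₀ hρ hball hx).trans ?_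
      gcongr
      have : 0 ≤ ‖l‖ * ρ := by positivity
      linarith
    · refine (hl x).trans ?_
      gcongr
      have hlx : l (x - x₀) ≤ ‖l‖ * ρ := (le_abs_self _).trans (l.le_opNorm_of_le hx.le)
      have : ‖x - x₀‖ / ρ < 1 := (div_lt_one hρ).2 hx
      linarith
  refine ⟨w x₀ * exp (‖l‖ * ρ + 1 + ‖x₀‖ / ρ), ρ⁻¹, inv_pos.2 hρ, fun x => (hcenter x).trans ?_⟩
  rw [mul_assoc, ← exp_add]
  gcongr
  have : (‖x‖ - ‖x₀‖) / ρ ≤ ‖x - x₀‖ / ρ := by gcongr; exact norm_sub_norm_le x x₀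
  rw [sub_div] at this
  rw [neg_mul, inv_mul_eq_div]
  linarith

end Decay

end IsLogConcaveFn

section ExponentialDecay

lemma integrable_pow_norm_mul_of_le_exp {E : Type*} [NormedAddCommGroup E] [MeasurableSpace E]
    [BorelSpace E] [SecondCountableTopology E] {μ : Measure E} [μ.HasTemperateGrowth]
    {f : E → ℝ} {C b : ℝ} (hb : 0 < b) (hf0 : ∀ x, 0 ≤ f x) (hf : ∀ x, f x ≤ C * exp (-b * ‖x‖))
    (hfm : AEStronglyMeasurable f μ) (k : ℕ) : Integrable (fun x => ‖x‖ ^ k * f x) μ := by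
  have hC : 0 ≤ C := nonneg_of_mul_nonneg_left ((hf0 0).trans (hf 0)) (exp_pos _)
  have hbound (n : ℕ) (x : E) : ‖x‖ ^ n * ‖f x‖ ≤ C * (n.factorial / b ^ n) := by
    have hexp : (b * ‖x‖) ^ n / n.factorial ≤ exp (b * ‖x‖) :=
      pow_div_factorial_le_exp _ (by positivity) n
    rw [mul_pow, div_le_iff₀ (by positivity)] at hexp
    calc ‖x‖ ^ n * ‖f x‖ ≤ ‖x‖ ^ n * (C * exp (-b * ‖x‖)) := by
          rw [norm_of_nonneg (hf0 x)]
          gcongr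
          exact hf x
      _ = C * (b ^ n * ‖x‖ ^ n / b ^ n * exp (-b * ‖x‖)) := by field_simp
      _ ≤ C * (exp (b * ‖x‖) * n.factorial / b ^ n * exp (-b * ‖x‖)) := by gcongr
      _ = C * (n.factorial / b ^ n) := by
          rw [neg_mul, exp_neg]
          field_simp
  simpa [abs_of_nonneg (hf0 _)] using
    integrable_of_le_of_pow_mul_le (fun x => by simpa using hbound 0 x) (hbound _) hfm

lemma integrableOn_Ioi_rpow_mul_of_le_exp {f : ℝ → ℝ} {C b s : ℝ} (hb : 0 < b) (hs : 0 < s)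
    (hf0 : ∀ t, 0 ≤ f t) (hf : ∀ t, 0 < t → f t ≤ C * exp (-b * t)) (hfm : Measurable f) :
    IntegrableOn (fun t => t ^ (s - 1) * f t) (Set.Ioi 0) := by
  have hmaj : IntegrableOn (fun t : ℝ => C * (t ^ (s - 1) * exp (-b * t ^ (1 : ℝ)))) (Set.Ioi 0) :=
    (integrableOn_rpow_mul_exp_neg_mul_rpow (by linarith) zero_lt_one hb).const_mul C
  refine hmaj.mono' (by fun_prop) ((ae_restrict_mem measurableSet_Ioi).mono fun t ht => ?_)
  have ht0 : 0 < t := ht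
  rw [norm_of_nonneg (mul_nonneg (by positivity) (hf0 t)), rpow_one, mul_left_comm]
  gcongr
  exact hf t ht0

end ExponentialDecay

section OpenCore

variable {E : Type*}

/-- The function `w` restricted to the interior of its set of positivity, and `0` elsewhere. For
log-concave `w` this only changes `w` on a null set, and makes it measurable. -/
def openCore [TopologicalSpace E] (w : E → ℝ) : E → ℝ := (interior {x | 0 < w x}).indicator w

lemma setOf_openCore_pos [TopologicalSpace E] (w : E → ℝ) :
    {x | 0 < openCore w x} = interior {x | 0 < w x} := by
  ext x
  by_cases hx : x ∈ interior {x | 0 < w x}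
  · simpa [openCore, hx] using interior_subset (s := {x | 0 < w x}) hx
  · simp [openCore, hx]

variable [NormedAddCommGroup E] [NormedSpace ℝ E] {w : E → ℝ}

lemma IsLogConcaveFn.openCore (hw : IsLogConcaveFn w) : IsLogConcaveFn (openCore w) := by
  have hnonneg : ∀ x, 0 ≤ _root_.openCore w x := Set.indicator_nonneg fun x _ => hw.nonneg x
  refine ⟨hnonneg, fun x y a ha ha1 => ?_⟩
  obtain rfl | ha0 := ha.eq_or_lt
  · simp
  obtain rfl | ha1 := ha1.eq_or_lt
  · simp
  by_cases hx : x ∈ interior {x | 0 < w x}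
  swap
  · simpa [_root_.openCore, hx, zero_rpow ha0.ne'] using hnonneg _
  by_cases hy : y ∈ interior {x | 0 < w x}
  swap
  · simpa [_root_.openCore, hy, zero_rpow (sub_pos.2 ha1).ne'] using hnonneg _
  have hxy := hw.convex_pos.interior hx hy ha (sub_pos.2 ha1).le (add_sub_cancel _ _)
  simpa only [_root_.openCore, Set.indicator_of_mem, hx, hy, hxy] using hw.2 x y a ha ha1.le

lemma openCore_ae_eq [FiniteDimensional ℝ E] [MeasurableSpace E] [BorelSpace E] (μ : Measure E)
    [μ.IsAddHaarMeasure] (hw : IsLogConcaveFn w) : openCore w =ᵐ[μ] w := by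
  refine measure_mono_null (fun x hx => ?_) (hw.convex_pos.addHaar_frontier μ)
  by_contra hfr
  refine hx ?_
  by_cases hxi : x ∈ interior {x | 0 < w x}
  · simp [openCore, hxi]
  · have hxpos : ¬ 0 < w x := fun h => hfr ⟨subset_closure h, hxi⟩
    simpa [openCore, hxi] using ((hw.nonneg x).antisymm (not_lt.1 hxpos)).symm

lemma subsingleton_setOf_smul_mem_sdiff_interior {s : Set E} (hs : Convex ℝ s)
    (h0 : 0 ∈ interior s) (x : E) :
    {t : ℝ | 0 < t ∧ t • x ∈ s \ interior s}.Subsingleton := by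
  have hlt (t u : ℝ) (ht : 0 < t) (htu : t < u) (hu : u • x ∈ s) : t • x ∈ interior s := by
    have hu0 := ht.trans htu
    have := hs.combo_interior_self_mem_interior h0 hu (sub_pos.2 ((div_lt_one hu0).2 htu))
      (by positivity) (sub_add_cancel 1 (t / u))
    rwa [smul_zero, zero_add, smul_smul, div_mul_cancel₀ _ hu0.ne'] at this
  rintro t ⟨ht, hts, hti⟩ u ⟨hu, hus, hui⟩
  rcases lt_trichotomy t u with h | h | h
  exacts [(hti (hlt t u ht h hus)).elim, h, (hui (hlt u t hu h hts)).elim]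

lemma ballBody_openCore {m : ℕ} {w : EuclideanSpace ℝ (Fin m) → ℝ} (hw : IsLogConcaveFn w)
    (h0 : 0 ∈ interior {x | 0 < w x}) (p : ℝ) : ballBody (openCore w) p = ballBody w p := by
  ext x
  suffices ∀ᵐ t ∂volume.restrict (Set.Ioi (0 : ℝ)), openCore w (t • x) = w (t • x) by
    have hint := integral_congr_ae (this.mono fun t ht => congrArg (t ^ (p - 1) * ·) ht)
    simp only [ballBody, Set.mem_ofPred_eq, hint]
  have hnull : volume {t : ℝ | 0 < t ∧ t • x ∈ {x | 0 < w x} \ interior {x | 0 < w x}} = 0 :=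
    (subsingleton_setOf_smul_mem_sdiff_interior hw.convex_pos h0 x).measure_zero _
  filter_upwards [ae_restrict_mem measurableSet_Ioi,
    ae_restrict_of_ae (measure_eq_zero_iff_ae_notMem.1 hnull)] with t ht ht'
  by_cases hi : t • x ∈ interior {x | 0 < w x}
  · simp [openCore, hi]
  · have hpos : ¬ 0 < w (t • x) := fun h => ht' ⟨ht, h, hi⟩
    simpa [openCore, hi] using (hw.nonneg _).antisymm (not_lt.1 hpos)

end OpenCore

section Centered

variable {E : Type*} [NormedAddCommGroup E] [NormedSpace ℝ E] [MeasurableSpace E]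

/-- A log-concave density with open nonempty support and barycenter at the origin. Openness of the
support is harmless by `openCore_ae_eq`, and forces `w` to be measurable. -/
structure IsCenteredLogConcave (w : E → ℝ) (μ : Measure E) : Prop where
  isLogConcaveFn : IsLogConcaveFn w
  isOpen_pos : IsOpen {x | 0 < w x}
  nonempty_pos : {x | 0 < w x}.Nonempty
  integrable : Integrable w μ
  integral_smul_eq_zero : ∫ x, w x • x ∂μ = 0

variable {μ : Measure E} {w : E → ℝ}

lemma IsCenteredLogConcave.integral_pos [μ.IsOpenPosMeasure] (hw : IsCenteredLogConcave w μ) :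
    0 < ∫ x, w x ∂μ :=
  (integral_pos_iff_support_of_nonneg hw.isLogConcaveFn.nonneg hw.integrable).2
    ((hw.isOpen_pos.measure_pos μ hw.nonempty_pos).trans_le
      (measure_mono fun _ hx => (show 0 < w _ from hx).ne'))

variable [FiniteDimensional ℝ E] [BorelSpace E]

lemma IsCenteredLogConcave.measurable (hw : IsCenteredLogConcave w μ) : Measurable w :=
  hw.isLogConcaveFn.measurable hw.isOpen_pos

variable [μ.IsAddHaarMeasure]

theorem IsLogConcaveFn.isCenteredLogConcave_openCore (hw : IsLogConcaveFn w)
    (hwi : Integrable w μ) (hpos : 0 < ∫ x, w x ∂μ) (hbary : ∫ x, w x • x ∂μ = 0) :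
    IsCenteredLogConcave (_root_.openCore w) μ where
  isLogConcaveFn := hw.openCore
  isOpen_pos := setOf_openCore_pos w ▸ isOpen_interior
  nonempty_pos := by
    by_contra! hempty
    have hzero : _root_.openCore w = 0 := by
      rw [setOf_openCore_pos] at hempty
      exact funext fun x => by simp [_root_.openCore, hempty]
    rw [← integral_congr_ae (openCore_ae_eq μ hw), hzero] at hpos
    simp at hpos
  integrable := hwi.congr (openCore_ae_eq μ hw).symm
  integral_smul_eq_zero := by
    rw [← hbary]
    exact integral_congr_ae ((openCore_ae_eq μ hw).mono fun x hx => congrArg (· • x) hx)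

namespace IsCenteredLogConcave

lemma exists_le_mul_exp_neg_norm (hw : IsCenteredLogConcave w μ) :
    ∃ C b : ℝ, 0 < b ∧ ∀ x, w x ≤ C * exp (-b * ‖x‖) :=
  hw.isLogConcaveFn.exists_le_mul_exp_neg_norm hw.measurable hw.integrable
    (hw.isOpen_pos.interior_eq.symm ▸ hw.nonempty_pos)

lemma integrable_smul (hw : IsCenteredLogConcave w μ) : Integrable (fun x => w x • x) μ := by
  obtain ⟨C, b, hb, hle⟩ := hw.exists_le_mul_exp_neg_norm
  refine ((integrable_pow_norm_mul_of_le_exp hb hw.isLogConcaveFn.nonneg hle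
    hw.integrable.aestronglyMeasurable 1).mono'
      (hw.measurable.smul measurable_id).aestronglyMeasurable (.of_forall fun x => ?_))
  rw [norm_smul, norm_of_nonneg (hw.isLogConcaveFn.nonneg x), pow_one, mul_comm]

lemma integrable_mul_clm (hw : IsCenteredLogConcave w μ) (l : E →L[ℝ] ℝ) :
    Integrable (fun x => w x * l x) μ := by
  simpa using l.integrable_comp hw.integrable_smul

lemma integral_mul_clm_eq_zero (hw : IsCenteredLogConcave w μ) (l : E →L[ℝ] ℝ) :
    ∫ x, w x * l x ∂μ = 0 := by
  have := l.integral_comp_comm hw.integrable_smul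
  simpa only [hw.integral_smul_eq_zero, map_smul, smul_eq_mul, map_zero] using this

-- Otherwise a functional is negative on the whole support, and so is its mean.
theorem apply_zero_pos (hw : IsCenteredLogConcave w μ) : 0 < w 0 := by
  by_contra h0
  obtain ⟨φ, hφ⟩ := geometric_hahn_banach_open_point hw.isLogConcaveFn.convex_pos hw.isOpen_pos
    (x := 0) h0
  simp only [map_zero] at hφ
  have hnonneg (x : E) : 0 ≤ w x * (-φ) x := by
    obtain hx | hx := (hw.isLogConcaveFn.nonneg x).eq_or_lt
    · simp [← hx]
    · exact mul_nonneg hx.le (neg_nonneg.2 (hφ x hx).le)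
  refine (hw.integral_mul_clm_eq_zero (-φ)).not_gt ?_
  refine (integral_pos_iff_support_of_nonneg hnonneg (hw.integrable_mul_clm _)).2
    ((hw.isOpen_pos.measure_pos μ hw.nonempty_pos).trans_le (measure_mono fun x hx => ?_))
  exact (mul_pos hx (neg_pos.2 (hφ x hx))).ne'

end IsCenteredLogConcave

end Centered

section Fradelizi

-- Bernoulli: `(1 + ε L) (1 - n ε) ≤ (1 + ε L) (1 - ε) ^ n ≤ 1`, and let `ε → 0`.
lemma le_natCast_of_forall_one_add_mul_mul_pow_le {L : ℝ} {n : ℕ}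
    (h : ∀ ε, 0 < ε → ε < 1 → (1 + ε * L) * (1 - ε) ^ n ≤ 1) : L ≤ n := by
  by_contra! hlt
  have hL : 0 < L := (Nat.cast_nonneg n).trans_lt hlt
  set ε := (L - n) / (L * (n + 2)) with hε_def
  have hε : 0 < ε := div_pos (sub_pos.2 hlt) (by positivity)
  have hεL : ε * L * (n + 2) = L - n := by rw [hε_def]; field_simp
  have hε1 : ε < 1 := (div_lt_one (by positivity)).2 (by nlinarith)
  have hbernoulli : 1 + n * -ε ≤ (1 + -ε) ^ n := one_add_mul_le_pow (by linarith) n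
  have hprod : (1 + ε * L) * (1 + n * -ε) ≤ 1 :=
    (mul_le_mul_of_nonneg_left hbernoulli (by positivity)).trans (h ε hε hε1)
  have hpos : 0 < ε * (ε * L) := by positivity
  nlinarith [congrArg (ε * ·) hεL]

lemma IsLogConcaveFn.mul_one_add_le {E : Type*} [AddCommGroup E] [Module ℝ E] {w : E → ℝ}
    (hw : IsLogConcaveFn w) {a b : ℝ} (ha : 0 ≤ a) (hb : 0 ≤ b) (hab : a + b = 1) {x y : E}
    (hx : 0 < w x) (hy : 0 < w y) :
    w x * (1 + b * (log (w y) - log (w x))) ≤ w (a • x + b • y) := by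
  refine le_trans ?_ (hw.rpow_mul_rpow_le ha hb hab x y)
  have hexp : w x ^ a * w y ^ b = w x * exp (b * (log (w y) - log (w x))) := by
    obtain rfl : a = 1 - b := by linarith
    have hsplit : log (w x) * (1 - b) + log (w y) * b
        = log (w x) + b * (log (w y) - log (w x)) := by ring
    rw [rpow_def_of_pos hx, rpow_def_of_pos hy, ← exp_add, hsplit, exp_add, exp_log hx]
  rw [hexp, add_comm]
  exact mul_le_mul_of_nonneg_left (add_one_le_exp _) hx.le

namespace IsCenteredLogConcave

variable {E : Type*} [NormedAddCommGroup E] [NormedSpace ℝ E] [FiniteDimensional ℝ E]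
  [MeasurableSpace E] [BorelSpace E] {μ : Measure E} [μ.IsAddHaarMeasure] {w : E → ℝ}

-- Integrate log-concavity between `x` and `x₀` against the tangent bound
-- `log (w x) ≤ log (w 0) + l x`; the linear term vanishes since `w` is centered.
lemma one_add_mul_log_mul_pow_le (hw : IsCenteredLogConcave w μ) {x₀ : E} (hx₀ : 0 < w x₀) {ε : ℝ}
    (hε : 0 < ε) (hε1 : ε < 1) :
    (1 + ε * (log (w x₀) - log (w 0))) * (1 - ε) ^ Module.finrank ℝ E ≤ 1 := by
  have hlc := hw.isLogConcaveFn
  have hw0 := hw.apply_zero_pos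
  have hs : 0 < 1 - ε := sub_pos.2 hε1
  obtain ⟨l, hl⟩ := hlc.exists_le_mul_exp (x₀ := (0 : E)) (hw.isOpen_pos.interior_eq.symm ▸ hw0)
  have hpoint (x : E) : w x * (1 + ε * (log (w x₀) - log (w 0))) - ε * (w x * l x)
      ≤ w ((1 - ε) • x + ε • x₀) := by
    obtain hx | hx := (hlc.nonneg x).eq_or_lt
    · simpa [← hx] using hlc.nonneg _
    have hlog : log (w x) ≤ log (w 0) + l x := by
      rw [log_le_iff_le_exp hx, exp_add, exp_log hw0]
      simpa using hl x
    refine le_trans ?_ (hlc.mul_one_add_le hs.le hε.le (sub_add_cancel _ _) hx hx₀)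
    rw [mul_left_comm, ← mul_sub]
    gcongr
    nlinarith
  have hscaled : Integrable (fun x => w ((1 - ε) • x + ε • x₀)) μ :=
    (hw.integrable.comp_add_right (ε • x₀)).comp_smul hs.ne'
  have hmono := integral_mono ((hw.integrable.mul_const _).sub
    ((hw.integrable_mul_clm l).const_mul ε)) hscaled hpoint
  have hcov : ∫ x, w ((1 - ε) • x + ε • x₀) ∂μ
      = ((1 - ε) ^ Module.finrank ℝ E)⁻¹ * ∫ x, w x ∂μ := by
    rw [Measure.integral_comp_smul μ (fun x => w (x + ε • x₀)), integral_add_right_eq_self,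
      abs_of_pos (by positivity), smul_eq_mul]
  simp only [Pi.sub_apply] at hmono
  rw [integral_sub (hw.integrable.mul_const _) ((hw.integrable_mul_clm l).const_mul ε),
    integral_mul_const, integral_const_mul, hw.integral_mul_clm_eq_zero, mul_zero, sub_zero, hcov,
    mul_comm] at hmono
  rw [← le_div_iff₀ (by positivity), one_div]
  exact le_of_mul_le_mul_right hmono hw.integral_pos

theorem le_exp_finrank_mul (hw : IsCenteredLogConcave w μ) (x : E) :
    w x ≤ exp (Module.finrank ℝ E) * w 0 := by
  have hw0 := hw.apply_zero_pos
  obtain hx | hx := (hw.isLogConcaveFn.nonneg x).eq_or_lt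
  · rw [← hx]; positivity
  have hlog := le_natCast_of_forall_one_add_mul_mul_pow_le fun ε hε hε1 =>
    hw.one_add_mul_log_mul_pow_le hx hε hε1
  rwa [sub_le_iff_le_add, log_le_iff_le_exp hx, exp_add, exp_log hw0] at hlog

end IsCenteredLogConcave

end Fradelizi

section Grunbaum

variable {α : Type*} [MeasurableSpace α] {μ : Measure α} [IsFiniteMeasure μ] {T : α → ℝ}

variable (μ T) in
lemma antitone_measureReal_setOf_le : Antitone fun t => μ.real {x | t ≤ T x} :=
  fun _ _ hst => measureReal_mono fun _ hx => hst.trans hx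

variable (μ T) in
lemma tendsto_measureReal_setOf_le_atBot :
    Filter.Tendsto (fun t => μ.real {x | t ≤ T x}) Filter.atBot (nhds (μ.real Set.univ)) := by
  have hmono : Antitone fun t => {x | t ≤ T x} := fun _ _ hst _ hx => hst.trans hx
  have hunion : ⋃ t, {x | t ≤ T x} = Set.univ :=
    Set.eq_univ_of_forall fun x => Set.mem_iUnion.2 ⟨T x, le_refl (T x)⟩
  rw [← hunion]
  exact (ENNReal.tendsto_toReal (measure_ne_top _ _)).comp (tendsto_measure_iUnion_atBot hmono)

lemma ae_eq_zero_of_integral_eq_zero_of_measureReal_eq_zero (hT : Integrable T μ)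
    (hmean : ∫ x, T x ∂μ = 0) (htail : ∀ t > 0, μ.real {x | t ≤ T x} = 0) : T =ᵐ[μ] 0 := by
  have hnonpos : T ≤ᵐ[μ] 0 := by
    have hlt : ∀ᵐ x ∂μ, ∀ n : ℕ, T x < 1 / (n + 1) := ae_all_iff.2 fun n => by
      have hn := htail (1 / (n + 1)) (by positivity)
      rw [measureReal_eq_zero_iff] at hn
      simpa only [ae_iff, not_lt] using hn
    exact hlt.mono fun x hx =>
      ge_of_tendsto' tendsto_one_div_add_atTop_nhds_zero_nat fun n => (hx n).le
  have hneg := (integral_eq_zero_iff_of_nonneg_ae (hnonpos.mono fun x hx => neg_nonneg.2 hx)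
    hT.neg).1 (by simp only [integral_neg, hmean, neg_zero])
  exact hneg.mono fun x hx => neg_eq_zero.1 hx

lemma IsLogConcaveFn.exists_measureReal_le_mul_exp
    (hlc : IsLogConcaveFn fun t => μ.real {x | t ≤ T x}) {ε : ℝ} (hε : 0 < ε)
    (hpos : 0 < μ.real {x | ε ≤ T x}) :
    ∃ k : ℝ, ∀ t, μ.real {x | t ≤ T x} ≤ μ.real {x | 0 ≤ T x} * exp (k * t) := by
  have hint : (0 : ℝ) ∈ interior {t | 0 < μ.real {x | t ≤ T x}} :=
    mem_interior_iff_mem_nhds.2 <| Filter.mem_of_superset (Iic_mem_nhds hε) fun t ht =>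
      hpos.trans_le (antitone_measureReal_setOf_le μ T ht)
  obtain ⟨l, hl⟩ := hlc.exists_le_mul_exp hint
  refine ⟨l 1, fun t => ?_⟩
  have hlt : l t = l 1 * t := by rw [mul_comm, ← smul_eq_mul, ← map_smul, smul_eq_mul, mul_one]
  simpa only [sub_zero, hlt] using hl t

-- The variable `h = c + κ T` has mean `c`, while its tail is dominated by `M e⁻ʳ`, so that
-- its positive part has integral at most `M`.
lemma measureReal_univ_le_exp_one_mul_of_le_mul_exp_neg (hT : Integrable T μ)
    (hmean : ∫ x, T x ∂μ = 0) (hpos : 0 < μ.real {x | 0 ≤ T x}) {κ : ℝ} (hκ : 0 < κ)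
    (htail : ∀ t, μ.real {x | t ≤ T x} ≤ μ.real {x | 0 ≤ T x} * exp (-κ * t)) :
    μ.real Set.univ ≤ exp 1 * μ.real {x | 0 ≤ T x} := by
  set M := μ.real Set.univ
  set G := μ.real {x | 0 ≤ T x}
  have hM : 0 < M := hpos.trans_le (measureReal_mono (Set.subset_univ _))
  set c := log (M / G) with hc_def
  have hint : Integrable (fun x => c + κ * T x) μ := (integrable_const c).add (hT.const_mul κ)
  have hmeasure {r : ℝ} (hr : 0 < r) : μ.real {x | r ≤ max (c + κ * T x) 0} ≤ M * exp (-r) := by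
    have hset : {x | r ≤ max (c + κ * T x) 0} = {x | (r - c) / κ ≤ T x} := by
      ext x
      simp only [le_max_iff, hr.not_ge, or_false, Set.mem_ofPred_eq, div_le_iff₀ hκ,
        sub_le_iff_le_add', mul_comm κ]
    have hexp : G * exp (-κ * ((r - c) / κ)) = M * exp (-r) := by
      have harg : -κ * ((r - c) / κ) = c + -r := by field_simp; ring
      rw [harg, exp_add, hc_def, exp_log (by positivity)]
      field_simp
    exact hset ▸ hexp ▸ htail _
  have hmain : M * c ≤ M := calc
    M * c = ∫ x, (c + κ * T x) ∂μ := by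
        rw [integral_add (integrable_const c) (hT.const_mul κ), integral_const_mul, hmean,
          integral_const, mul_zero, add_zero, smul_eq_mul]
    _ ≤ ∫ x, max (c + κ * T x) 0 ∂μ := integral_mono hint hint.pos_part fun x => le_max_left _ _
    _ = ∫ r in Set.Ioi 0, μ.real {x | r ≤ max (c + κ * T x) 0} :=
        hint.pos_part.integral_eq_integral_meas_le (.of_forall fun x => le_max_right _ _)
    _ ≤ ∫ r in Set.Ioi 0, M * exp (-r) :=
        integral_mono_of_nonneg (.of_forall fun _ => measureReal_nonneg)
          ((integrableOn_exp_neg_Ioi 0).const_mul M)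
          ((ae_restrict_mem measurableSet_Ioi).mono fun r hr => hmeasure hr)
    _ = M := by rw [integral_const_mul, integral_exp_neg_Ioi_zero, mul_one]
  have hc1 : c ≤ 1 := (mul_le_iff_le_one_right hM).1 hmain
  rwa [hc_def, log_le_iff_le_exp (by positivity), div_le_iff₀ hpos] at hc1

theorem measureReal_univ_le_exp_one_mul_of_isLogConcaveFn
    (hlc : IsLogConcaveFn fun t => μ.real {x | t ≤ T x}) (hT : Integrable T μ)
    (hmean : ∫ x, T x ∂μ = 0) : μ.real Set.univ ≤ exp 1 * μ.real {x | 0 ≤ T x} := by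
  have hone {G : ℝ} (hG : 0 ≤ G) : G ≤ exp 1 * G :=
    le_mul_of_one_le_left hG (one_le_exp zero_le_one)
  by_cases htail : ∀ t > 0, μ.real {x | t ≤ T x} = 0
  · have hzero := ae_eq_zero_of_integral_eq_zero_of_measureReal_eq_zero hT hmean htail
    have hfull : μ.real {x | 0 ≤ T x} = μ.real Set.univ :=
      measureReal_congr (Filter.eventuallyEq_univ.2 (hzero.mono fun x hx => hx.ge))
    exact hfull ▸ hone measureReal_nonneg
  push Not at htail
  obtain ⟨ε, hε, hne⟩ := htail
  have hpos : 0 < μ.real {x | ε ≤ T x} := measureReal_nonneg.lt_of_ne' hne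
  obtain ⟨k, hk⟩ := hlc.exists_measureReal_le_mul_exp hε hpos
  rcases lt_or_ge k 0 with hk0 | hk0
  · exact measureReal_univ_le_exp_one_mul_of_le_mul_exp_neg hT hmean
      (hpos.trans_le (antitone_measureReal_setOf_le μ T hε.le)) (neg_pos.2 hk0) (by simpa using hk)
  · refine (le_of_tendsto (tendsto_measureReal_setOf_le_atBot μ T) ?_).trans
      (hone measureReal_nonneg)
    filter_upwards [Filter.eventually_le_atBot 0] with t ht
    refine (hk t).trans (mul_le_of_le_one_right measureReal_nonneg (exp_le_one_iff.2 ?_))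
    exact mul_nonpos_of_nonneg_of_nonpos hk0 ht

variable {E : Type*} [NormedAddCommGroup E] [NormedSpace ℝ E] [FiniteDimensional ℝ E]
  [MeasurableSpace E] [BorelSpace E] {ν : Measure E} [ν.IsAddHaarMeasure] {w : E → ℝ}

theorem IsCenteredLogConcave.withDensity_univ_le (hw : IsCenteredLogConcave w ν) (l : E →L[ℝ] ℝ) :
    ν.withDensity (fun x => .ofReal (w x)) Set.univ
      ≤ .ofReal (exp 1) * ν.withDensity (fun x => .ofReal (w x)) {x | 0 ≤ l x} := by
  have hlc := hw.isLogConcaveFn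
  have hm := hw.measurable.ennreal_ofReal
  have hfin : ∀ᵐ x ∂ν, ENNReal.ofReal (w x) < ⊤ := .of_forall fun _ => ENNReal.ofReal_lt_top
  have := isFiniteMeasure_withDensity_ofReal hw.integrable.2
  have hdens (x : E) : (ENNReal.ofReal (w x)).toReal • l x = w x * l x := by
    rw [ENNReal.toReal_ofReal (hlc.nonneg x), smul_eq_mul]
  have hint : Integrable l (ν.withDensity fun x => .ofReal (w x)) := by
    rw [integrable_withDensity_iff_integrable_smul' hm hfin]
    simpa only [hdens] using hw.integrable_mul_clm l
  have hmean : ∫ x, l x ∂(ν.withDensity fun x => .ofReal (w x)) = 0 := by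
    rw [integral_withDensity_eq_integral_toReal_smul hm hfin]
    simpa only [hdens] using hw.integral_mul_clm_eq_zero l
  have hreal := measureReal_univ_le_exp_one_mul_of_isLogConcaveFn
    (hlc.real_withDensity_halfSpace ν hw.measurable hw.integrable l) hint hmean
  rw [← ENNReal.ofReal_toReal (measure_ne_top _ Set.univ),
    ← ENNReal.ofReal_toReal (measure_ne_top _ {x | 0 ≤ l x}), ← ENNReal.ofReal_mul (exp_nonneg 1)]
  exact ENNReal.ofReal_le_ofReal hreal

end Grunbaum

section RadialMoment

/-- The `s`-th moment of `f` on `(0, ∞)`, normalised so that the indicator of `[0, R]` has moment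
`R ^ s`. -/
def radialMoment (s : ℝ) (f : ℝ → ℝ) : ℝ := s * ∫ t in Set.Ioi 0, t ^ (s - 1) * f t

/-- Finiteness of the moment `radialMoment s f`. -/
def HasRadialMoment (s : ℝ) (f : ℝ → ℝ) : Prop :=
  IntegrableOn (fun t => t ^ (s - 1) * f t) (Set.Ioi 0)

variable {f g : ℝ → ℝ} {a p : ℝ}

lemma radialMoment_nonneg (ha : 0 ≤ a) (hf : ∀ t, 0 ≤ f t) : 0 ≤ radialMoment a f :=
  mul_nonneg ha <| setIntegral_nonneg measurableSet_Ioi fun t ht =>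
    mul_nonneg (rpow_nonneg (le_of_lt ht) _) (hf t)

-- `(t ^ (p - a) - T ^ (p - a)) * (f t - g t) ≤ 0` for all `t`.
lemma mul_radialMoment_sub_le_of_crossing {T : ℝ} (ha : 0 < a) (hap : a ≤ p) (hT : 0 ≤ T)
    (hfa : HasRadialMoment a f) (hfp : HasRadialMoment p f) (hga : HasRadialMoment a g)
    (hgp : HasRadialMoment p g) (hbelow : ∀ t, 0 < t → t < T → g t ≤ f t)
    (habove : ∀ t, T < t → f t ≤ g t) :
    a * (radialMoment p f - radialMoment p g)
      ≤ p * (T ^ (p - a) * (radialMoment a f - radialMoment a g)) := by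
  have hpoint (t : ℝ) (ht : 0 < t) : t ^ (p - 1) * f t - t ^ (p - 1) * g t
      ≤ T ^ (p - a) * (t ^ (a - 1) * f t - t ^ (a - 1) * g t) := by
    have hpow : t ^ (p - 1) = t ^ (p - a) * t ^ (a - 1) := by rw [← rpow_add ht]; ring_nf
    have hsign : (t ^ (p - a) - T ^ (p - a)) * (f t - g t) ≤ 0 := by
      rcases lt_trichotomy t T with h | rfl | h
      · exact mul_nonpos_of_nonpos_of_nonneg
          (sub_nonpos.2 (rpow_le_rpow ht.le h.le (sub_nonneg.2 hap))) (sub_nonneg.2 (hbelow t ht h))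
      · simp
      · exact mul_nonpos_of_nonneg_of_nonpos
          (sub_nonneg.2 (rpow_le_rpow hT h.le (sub_nonneg.2 hap))) (sub_nonpos.2 (habove t h))
    rw [hpow]
    nlinarith [mul_nonpos_of_nonneg_of_nonpos (rpow_nonneg ht.le (a - 1)) hsign]
  have hmono := setIntegral_mono_on (hfp.sub hgp) ((hfa.sub hga).const_mul (T ^ (p - a)))
    measurableSet_Ioi hpoint
  simp only [Pi.sub_apply] at hmono
  rw [integral_sub hfp hgp, integral_const_mul, integral_sub hfa hga] at hmono
  have := mul_le_mul_of_nonneg_left hmono (mul_nonneg ha.le (ha.le.trans hap))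
  simp only [radialMoment]
  linarith

lemma radialMoment_congr_of_le_of_eq (ha : a ≠ 0) (hfa : HasRadialMoment a f)
    (hga : HasRadialMoment a g) (hle : ∀ t, 0 < t → g t ≤ f t)
    (heq : radialMoment a f = radialMoment a g) : radialMoment p f = radialMoment p g := by
  have hint : ∫ t in Set.Ioi 0, (t ^ (a - 1) * f t - t ^ (a - 1) * g t) = 0 := by
    rw [integral_sub hfa hga, sub_eq_zero]
    exact mul_left_cancel₀ ha heq
  have hae := (setIntegral_eq_zero_iff_of_nonneg_ae
    ((ae_restrict_mem measurableSet_Ioi).mono fun t ht => sub_nonneg.2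
      (mul_le_mul_of_nonneg_left (hle t ht) (rpow_nonneg (le_of_lt ht) _))) (hfa.sub hga)).1 hint
  refine congrArg (p * ·) (integral_congr_ae ?_)
  filter_upwards [hae, ae_restrict_mem measurableSet_Ioi] with t ht (ht0 : 0 < t)
  rw [mul_left_cancel₀ (rpow_pos_of_pos ht0 _).ne' (sub_eq_zero.1 ht)]

section Bounded

variable {M R : ℝ}

lemma rpow_mul_indicator_Iic :
    (fun t => t ^ (a - 1) * (Set.Iic R).indicator (fun _ => M) t)
      = (Set.Iic R).indicator fun t => t ^ (a - 1) * M :=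
  funext fun _ => (Set.indicator_mul_right _ (fun t => t ^ (a - 1)) fun _ => M).symm

lemma hasRadialMoment_indicator_Iic (ha : 0 < a) (hR : 0 ≤ R) :
    HasRadialMoment a ((Set.Iic R).indicator fun _ => M) := by
  have hint : IntegrableOn (fun t : ℝ => t ^ (a - 1) * M) (Set.Ioc 0 R) :=
    ((intervalIntegrable_iff_integrableOn_Ioc_of_le hR).1
      (intervalIntegral.intervalIntegrable_rpow' (by linarith))).mul_const M
  rwa [HasRadialMoment, rpow_mul_indicator_Iic, integrableOn_indicator_iff measurableSet_Iic,
    Set.inter_comm, Set.Ioi_inter_Iic]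

lemma radialMoment_indicator_Iic (ha : 0 < a) (hR : 0 ≤ R) :
    radialMoment a ((Set.Iic R).indicator fun _ => M) = R ^ a * M := by
  rw [radialMoment, rpow_mul_indicator_Iic, setIntegral_indicator measurableSet_Iic,
    Set.Ioi_inter_Iic, integral_mul_const, ← intervalIntegral.integral_of_le hR,
    integral_rpow (.inl (by linarith)), sub_add_cancel, zero_rpow ha.ne', sub_zero]
  field_simp

theorem radialMoment_div_le_rpow_of_le (hM : 0 < M) (ha : 0 < a) (hap : a ≤ p)
    (hf0 : ∀ t, 0 ≤ f t) (hfM : ∀ t, f t ≤ M) (hfa : HasRadialMoment a f)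
    (hfp : HasRadialMoment p f) : radialMoment a f / M ≤ (radialMoment p f / M) ^ (a / p) := by
  have hp : 0 < p := ha.trans_le hap
  have hnonneg : 0 ≤ radialMoment a f / M := div_nonneg (radialMoment_nonneg ha.le hf0) hM.le
  set R := (radialMoment a f / M) ^ (1 / a) with hR_def
  have hR : 0 ≤ R := by positivity
  have hRa : R ^ a = radialMoment a f / M := by
    rw [hR_def, ← rpow_mul hnonneg, one_div_mul_cancel ha.ne', rpow_one]
  have hcross := mul_radialMoment_sub_le_of_crossing ha hap hR
    (hasRadialMoment_indicator_Iic (M := M) ha hR) (hasRadialMoment_indicator_Iic hp hR) hfa hfp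
    (fun t _ ht => by rw [Set.indicator_of_mem (show t ∈ Set.Iic R from ht.le)]; exact hfM t)
    (fun t ht => by rw [Set.indicator_of_notMem (show t ∉ Set.Iic R from ht.not_ge)]; exact hf0 t)
  rw [radialMoment_indicator_Iic ha hR, radialMoment_indicator_Iic hp hR, hRa,
    div_mul_cancel₀ _ hM.ne', sub_self, mul_zero, mul_zero] at hcross
  have hRp : R ^ p ≤ radialMoment p f / M :=
    (le_div_iff₀ hM).2 (sub_nonpos.1 (nonpos_of_mul_nonpos_right hcross ha))
  calc radialMoment a f / M = (R ^ p) ^ (a / p) := by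
        rw [← rpow_mul hR, mul_div_cancel₀ _ hp.ne', hRa]
    _ ≤ (radialMoment p f / M) ^ (a / p) := by gcongr

end Bounded

section LogConcave

variable {c l : ℝ}

lemma hasRadialMoment_mul_exp_neg (ha : 0 < a) (hl : 0 < l) :
    HasRadialMoment a fun t => c * exp (-l * t) := by
  have := (integrableOn_rpow_mul_exp_neg_mul_rpow (s := a - 1) (by linarith) zero_lt_one
    hl).const_mul c
  simpa only [HasRadialMoment, IntegrableOn, rpow_one, mul_left_comm c] using this

lemma radialMoment_mul_exp_neg (ha : 0 < a) (hl : 0 < l) :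
    radialMoment a (fun t => c * exp (-l * t)) = (1 / l) ^ a * (c * Gamma (a + 1)) := by
  simp only [radialMoment, mul_left_comm _ c, integral_const_mul, neg_mul]
  rw [integral_rpow_mul_exp_neg_mul_Ioi ha hl, Gamma_add_one ha.ne']
  ring

lemma IsLogConcaveFn.mul_exp_le_of_mul_exp_le (hf : IsLogConcaveFn f) (hf0 : 0 < f 0) {k t u : ℝ}
    (hu : 0 < u) (hut : u < t) (ht : f 0 * exp (k * t) ≤ f t) : f 0 * exp (k * u) ≤ f u := by
  have ht0 := hu.trans hut
  have hle1 : 0 ≤ 1 - u / t := sub_nonneg.2 ((div_le_one ht0).2 hut.le)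
  have hkt : k * t * (u / t) = k * u := by field_simp
  calc f 0 * exp (k * u) = (f 0 * exp (k * t)) ^ (u / t) * f 0 ^ (1 - u / t) := by
        rw [mul_rpow hf0.le (exp_nonneg _), ← exp_mul, hkt, mul_right_comm, ← rpow_add hf0,
          add_sub_cancel, rpow_one]
    _ ≤ f t ^ (u / t) * f 0 ^ (1 - u / t) := by gcongr
    _ ≤ f ((u / t) • t + (1 - u / t) • 0) :=
        hf.rpow_mul_rpow_le (by positivity) hle1 (add_sub_cancel _ _) t 0
    _ = f u := by rw [smul_zero, add_zero, smul_eq_mul, div_mul_cancel₀ _ ht0.ne']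

lemma forall_or_exists_threshold {P : ℝ → Prop} (hP : ∀ t u, 0 < u → u < t → P t → P u) :
    (∀ t, 0 < t → P t) ∨ ∃ T, 0 ≤ T ∧ (∀ t, 0 < t → t < T → P t) ∧ ∀ t, T < t → ¬ P t := by
  by_cases hall : ∀ t, 0 < t → P t
  · exact .inl hall
  push Not at hall
  obtain ⟨t₀, ht₀⟩ := hall
  have hbdd : BddBelow {t | 0 < t ∧ ¬ P t} := ⟨0, fun t ht => ht.1.le⟩
  refine .inr ⟨sInf {t | 0 < t ∧ ¬ P t}, le_csInf ⟨t₀, ht₀⟩ fun t ht => ht.1.le,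
    fun t ht htT => ?_, fun t ht hPt => ?_⟩
  · by_contra hPt
    exact (csInf_le hbdd ⟨ht, hPt⟩).not_gt htT
  · obtain ⟨u, ⟨hu, hPu⟩, hut⟩ := exists_lt_of_csInf_lt ⟨t₀, ht₀⟩ ht
    exact hPu (hP t u hu hut hPt)

lemma IsLogConcaveFn.radialMoment_le_of_radialMoment_eq (hf : IsLogConcaveFn f) (hf0 : 0 < f 0)
    (ha : 0 < a) (hap : a ≤ p) (hfa : HasRadialMoment a f) (hfp : HasRadialMoment p f)
    (hl : 0 < l) (heq : radialMoment a f = radialMoment a fun t => f 0 * exp (-l * t)) :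
    radialMoment p f ≤ radialMoment p fun t => f 0 * exp (-l * t) := by
  have hga : HasRadialMoment a fun t => f 0 * exp (-l * t) := hasRadialMoment_mul_exp_neg ha hl
  rcases forall_or_exists_threshold (P := fun t => f 0 * exp (-l * t) ≤ f t)
    (fun _ _ hu hut => hf.mul_exp_le_of_mul_exp_le hf0 hu hut) with hle | ⟨T, hT, hbelow, habove⟩
  · exact (radialMoment_congr_of_le_of_eq ha.ne' hfa hga hle heq).le
  · have hcross := mul_radialMoment_sub_le_of_crossing ha hap hT hfa hfp hga
      (hasRadialMoment_mul_exp_neg (ha.trans_le hap) hl) hbelow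
      fun t ht => (not_le.1 (habove t ht)).le
    rw [heq, sub_self, mul_zero, mul_zero] at hcross
    exact sub_nonpos.1 (nonpos_of_mul_nonpos_right hcross ha)

theorem IsLogConcaveFn.rpow_radialMoment_div_le (hf : IsLogConcaveFn f) (hf0 : 0 < f 0)
    (ha : 0 < a) (hap : a ≤ p) (hfa : HasRadialMoment a f) (hfp : HasRadialMoment p f) :
    (radialMoment p f / (f 0 * Gamma (p + 1))) ^ (a / p)
      ≤ radialMoment a f / (f 0 * Gamma (a + 1)) := by
  have hp : 0 < p := ha.trans_le hap
  have hΓa : 0 < f 0 * Gamma (a + 1) := mul_pos hf0 (Gamma_pos_of_pos (by linarith))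
  have hΓp : 0 < f 0 * Gamma (p + 1) := mul_pos hf0 (Gamma_pos_of_pos (by linarith))
  have hp0 := radialMoment_nonneg hp.le hf.nonneg
  obtain hzero | hpos := (radialMoment_nonneg ha.le hf.nonneg).eq_or_lt
  · have hfp0 : radialMoment p f = radialMoment p fun _ => 0 :=
      radialMoment_congr_of_le_of_eq ha.ne' hfa (by simp [HasRadialMoment])
        (fun t _ => hf.nonneg t) (by rw [← hzero]; simp [radialMoment])
    rw [hfp0, ← hzero]
    simp [radialMoment, zero_rpow (div_pos ha hp).ne']
  have hdiv : 0 < radialMoment a f / (f 0 * Gamma (a + 1)) := div_pos hpos hΓa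
  set L := (radialMoment a f / (f 0 * Gamma (a + 1))) ^ (1 / a) with hL_def
  have hL : 0 < L := by positivity
  have hLa : L ^ a = radialMoment a f / (f 0 * Gamma (a + 1)) := by
    rw [hL_def, ← rpow_mul hdiv.le, one_div_mul_cancel ha.ne', rpow_one]
  have hle := hf.radialMoment_le_of_radialMoment_eq hf0 ha hap hfa hfp (one_div_pos.2 hL) (by
    rw [radialMoment_mul_exp_neg ha (one_div_pos.2 hL), one_div_one_div, hLa,
      div_mul_cancel₀ _ hΓa.ne'])
  rw [radialMoment_mul_exp_neg hp (one_div_pos.2 hL), one_div_one_div] at hle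
  calc (radialMoment p f / (f 0 * Gamma (p + 1))) ^ (a / p) ≤ (L ^ p) ^ (a / p) :=
        rpow_le_rpow (by positivity) ((div_le_iff₀ hΓp).2 hle) (by positivity)
    _ = radialMoment a f / (f 0 * Gamma (a + 1)) := by
        rw [← rpow_mul hL.le, mul_div_cancel₀ _ hp.ne', hLa]

end LogConcave

end RadialMoment

section GammaComparison

lemma Gamma_add_add_one_le {a q : ℝ} (ha : 0 < a) (hq : 1 ≤ q) :
    Gamma (a + q + 1) ≤ (a + q) ^ q * Gamma (a + 1) := by
  have hq0 : 0 < q := by linarith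
  have hp : 0 < a + q := by linarith
  have hΓa : 0 < Gamma (a + 1) := Gamma_pos_of_pos (by linarith)
  have hΓp : 0 < Gamma (a + q) := Gamma_pos_of_pos hp
  have hlogΓ : log (Gamma (a + q + 1)) = log (a + q) + log (Gamma (a + q)) := by
    rw [Gamma_add_one hp.ne', log_mul hp.ne' hΓp.ne']
  have hconvex : log (Gamma (a + q))
      ≤ 1 / q * log (Gamma (a + 1)) + (1 - 1 / q) * log (Gamma (a + q + 1)) := by
    have h := convexOn_log_Gamma.2 (show 0 < a + 1 by linarith) (show 0 < a + q + 1 by linarith)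
      (show 0 ≤ 1 / q by positivity) (sub_nonneg.2 ((div_le_one hq0).2 hq)) (add_sub_cancel _ _)
    have hcombo : (1 / q) • (a + 1) + (1 - 1 / q) • (a + q + 1) = a + q := by
      simp only [smul_eq_mul]
      field_simp
      ring
    rwa [hcombo] at h
  rw [← log_le_log_iff (Gamma_pos_of_pos (by linarith)) (by positivity),
    log_mul (by positivity) hΓa.ne', log_rpow hp, hlogΓ]
  rw [hlogΓ] at hconvex
  have := mul_le_mul_of_nonneg_left hconvex hq0.le
  rw [mul_add, ← mul_assoc, ← mul_assoc, mul_sub, mul_one_div_cancel hq0.ne'] at this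
  linarith

lemma Gamma_rpow_le {n : ℕ} {q : ℝ} (hn : n ≠ 0) (hq : 1 ≤ q) :
    Gamma (n + q + 1) ^ ((n : ℝ) / (n + q)) ≤ exp q * Gamma (n + 1) := by
  have hn0 : (0 : ℝ) < n := by positivity
  have hp : 0 < n + q := by linarith
  have hΓ : 0 < Gamma ((n : ℝ) + 1) := Gamma_pos_of_pos (by linarith)
  have hpow : (n + q) ^ n ≤ exp (n + q) * Gamma (n + 1) := by
    rw [Gamma_nat_eq_factorial]
    exact (div_le_iff₀ (by positivity)).1 (pow_div_factorial_le_exp _ hp.le n)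
  calc Gamma (n + q + 1) ^ ((n : ℝ) / (n + q))
      ≤ ((n + q) ^ q * Gamma (n + 1)) ^ ((n : ℝ) / (n + q)) :=
        rpow_le_rpow (Gamma_nonneg_of_nonneg (by linarith)) (Gamma_add_add_one_le hn0 hq)
          (by positivity)
    _ = ((n + q) ^ n) ^ (q / (n + q)) * Gamma (n + 1) ^ ((n : ℝ) / (n + q)) := by
        rw [mul_rpow (by positivity) hΓ.le, ← rpow_natCast, ← rpow_mul hp.le, ← rpow_mul hp.le]
        ring_nf
    _ ≤ (exp (n + q) * Gamma (n + 1)) ^ (q / (n + q)) * Gamma (n + 1) ^ ((n : ℝ) / (n + q)) := by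
        gcongr
    _ = exp q * Gamma (n + 1) := by
        rw [mul_rpow (exp_nonneg _) hΓ.le, ← exp_mul, mul_div_cancel₀ _ hp.ne', mul_assoc,
          ← rpow_add hΓ, ← add_div, add_comm q, div_self hp.ne', rpow_one]

variable {f : ℝ → ℝ} {n : ℕ} {q : ℝ}

theorem exp_neg_mul_radialMoment_le (hn : n ≠ 0) (hq : 0 ≤ q) (hf : ∀ t, 0 ≤ f t) (hf0 : 0 < f 0)
    (hbound : ∀ t, f t ≤ exp n * f 0) (hfn : HasRadialMoment n f)
    (hfp : HasRadialMoment (n + q) f) :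
    exp (-q) * f 0 ^ (-(q / (n + q))) * radialMoment n f
      ≤ radialMoment (n + q) f ^ ((n : ℝ) / (n + q)) := by
  have hn0 : (0 : ℝ) < n := by positivity
  have hp : 0 < n + q := by linarith
  have hM : 0 < exp n * f 0 := by positivity
  have hnp : (n : ℝ) / (n + q) = 1 - q / (n + q) := by field_simp; ring
  have hmom := radialMoment_div_le_rpow_of_le hM hn0 (by linarith) hf hbound hfn hfp
  rw [div_rpow (radialMoment_nonneg hp.le hf) hM.le, div_le_div_iff₀ hM (by positivity),
    mul_comm] at hmom
  calc exp (-q) * f 0 ^ (-(q / (n + q))) * radialMoment n f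
      ≤ exp (-(n * (q / (n + q)))) * f 0 ^ (-(q / (n + q))) * radialMoment n f := by
        gcongr
        · exact radialMoment_nonneg hn0.le hf
        · rw [← mul_div_assoc, div_le_iff₀ hp]
          nlinarith
    _ = (exp n * f 0) ^ ((n : ℝ) / (n + q)) * radialMoment n f / (exp n * f 0) := by
        rw [hnp, rpow_sub hM, rpow_one, rpow_neg hf0.le, mul_rpow (exp_nonneg _) hf0.le, exp_neg,
          ← exp_mul]
        field_simp
    _ ≤ radialMoment (n + q) f ^ ((n : ℝ) / (n + q)) := (div_le_iff₀ hM).2 hmom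

theorem IsLogConcaveFn.rpow_radialMoment_le (hf : IsLogConcaveFn f) (hn : n ≠ 0) (hq : 1 ≤ q)
    (hf0 : 0 < f 0) (hfn : HasRadialMoment n f) (hfp : HasRadialMoment (n + q) f) :
    radialMoment (n + q) f ^ ((n : ℝ) / (n + q))
      ≤ exp q * f 0 ^ (-(q / (n + q))) * radialMoment n f := by
  have hn0 : (0 : ℝ) < n := by positivity
  have hp : 0 < n + q := by linarith
  have hΓp : 0 < Gamma (n + q + 1) := Gamma_pos_of_pos (by linarith)
  have hnp : (n : ℝ) / (n + q) = 1 - q / (n + q) := by field_simp; ring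
  have hmom := hf.rpow_radialMoment_div_le hf0 hn0 (by linarith) hfn hfp
  rw [div_rpow (radialMoment_nonneg hp.le hf.nonneg) (by positivity),
    div_le_iff₀ (by positivity)] at hmom
  calc radialMoment (n + q) f ^ ((n : ℝ) / (n + q))
      ≤ radialMoment n f / (f 0 * Gamma (n + 1))
          * (f 0 * Gamma (n + q + 1)) ^ ((n : ℝ) / (n + q)) := hmom
    _ ≤ radialMoment n f / (f 0 * Gamma (n + 1))
          * (f 0 ^ ((n : ℝ) / (n + q)) * (exp q * Gamma (n + 1))) := by
        rw [mul_rpow hf0.le hΓp.le]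
        gcongr
        · exact div_nonneg (radialMoment_nonneg hn0.le hf.nonneg) (by positivity)
        · exact Gamma_rpow_le hn hq
    _ = exp q * f 0 ^ (-(q / (n + q))) * radialMoment n f := by
        rw [hnp, rpow_sub hf0, rpow_one, rpow_neg hf0.le]
        field_simp

end GammaComparison

section Polar

variable {E : Type*} [NormedAddCommGroup E] [NormedSpace ℝ E] [FiniteDimensional ℝ E]
  [MeasurableSpace E] [BorelSpace E] [Nontrivial E] (μ : Measure E) [μ.IsAddHaarMeasure]

lemma lintegral_eq_lintegral_toSphere {f : E → ℝ≥0∞} (hf : Measurable f) :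
    ∫⁻ x, f x ∂μ = ∫⁻ φ : Metric.sphere (0 : E) 1, (∫⁻ r in Set.Ioi (0 : ℝ),
      .ofReal (r ^ (Module.finrank ℝ E - 1)) * f (r • (φ : E))) ∂μ.toSphere := by
  have hf_prod : Measurable fun z : Metric.sphere (0 : E) 1 × Set.Ioi (0 : ℝ) =>
      f ((z.2 : ℝ) • (z.1 : E)) := hf.comp (by fun_prop)
  calc ∫⁻ x, f x ∂μ = ∫⁻ x : ({(0)}ᶜ : Set E), f x ∂(μ.comap (↑)) := by
        rw [lintegral_subtype_comap (measurableSet_singleton _).compl f, restrict_compl_singleton]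
    _ = ∫⁻ z, f ((z.2 : ℝ) • (z.1 : E))
          ∂(μ.toSphere.prod (.volumeIoiPow (Module.finrank ℝ E - 1))) := by
        rw [← μ.measurePreserving_homeomorphUnitSphereProd.lintegral_comp hf_prod]
        refine lintegral_congr fun x => congrArg f ?_
        simp [smul_smul, norm_ne_zero_iff.2 x.2]
    _ = _ := by
        rw [lintegral_prod _ hf_prod.aemeasurable]
        refine lintegral_congr fun φ => ?_
        have hf_ray : Measurable fun r : Set.Ioi (0 : ℝ) => f ((r : ℝ) • (φ : E)) :=
          hf.comp (by fun_prop)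
        rw [Measure.volumeIoiPow, lintegral_withDensity_eq_lintegral_mul _ (by fun_prop) hf_ray]
        exact lintegral_subtype_comap measurableSet_Ioi
          fun r : ℝ => .ofReal (r ^ (Module.finrank ℝ E - 1)) * f (r • (φ : E))

lemma setLIntegral_cone_eq {f : E → ℝ≥0∞} (hf : Measurable f) {C : Set E} (hC : MeasurableSet C)
    (hcone : ∀ x, ∀ r : ℝ, 0 < r → (r • x ∈ C ↔ x ∈ C)) :
    ∫⁻ x in C, f x ∂μ = ∫⁻ φ in ((↑) : Metric.sphere (0 : E) 1 → E) ⁻¹' C,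
      (∫⁻ r in Set.Ioi (0 : ℝ), .ofReal (r ^ (Module.finrank ℝ E - 1)) * f (r • (φ : E)))
        ∂μ.toSphere := by
  rw [← lintegral_indicator hC, lintegral_eq_lintegral_toSphere μ (hf.indicator hC),
    ← lintegral_indicator (measurable_subtype_coe hC)]
  refine lintegral_congr fun φ => ?_
  by_cases hφ : (φ : E) ∈ C
  · rw [Set.indicator_of_mem (show φ ∈ (↑) ⁻¹' C from hφ)]
    refine setLIntegral_congr_fun measurableSet_Ioi fun r hr => ?_
    rw [Set.indicator_of_mem ((hcone _ r hr).2 hφ)]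
  · rw [Set.indicator_of_notMem (show φ ∉ (↑) ⁻¹' C from hφ)]
    refine (setLIntegral_congr_fun measurableSet_Ioi fun r hr => ?_).trans lintegral_zero
    rw [Set.indicator_of_notMem (mt (hcone _ r hr).1 hφ), mul_zero]

end Polar

section BallBody

lemma lintegral_pow_mul_ofReal_eq {f : ℝ → ℝ} {n : ℕ} (hn : n ≠ 0) (hf : ∀ t, 0 ≤ f t)
    (hfn : HasRadialMoment n f) :
    ∫⁻ r in Set.Ioi (0 : ℝ), .ofReal (r ^ (n - 1)) * .ofReal (f r)
      = ENNReal.ofReal (radialMoment n f / n) := by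
  have hrpow (r : ℝ) : r ^ ((n : ℝ) - 1) = r ^ (n - 1) := by
    rw [← Nat.cast_pred (Nat.pos_of_ne_zero hn), rpow_natCast]
  have hn0 : (n : ℝ) ≠ 0 := Nat.cast_ne_zero.2 hn
  rw [radialMoment, mul_div_cancel_left₀ _ hn0, ofReal_integral_eq_lintegral_ofReal hfn
    ((ae_restrict_mem measurableSet_Ioi).mono fun r hr => mul_nonneg (rpow_nonneg (le_of_lt hr) _)
      (hf r))]
  refine setLIntegral_congr_fun measurableSet_Ioi fun r (hr : 0 < r) => ?_
  rw [hrpow, ENNReal.ofReal_mul (by positivity)]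

lemma rpow_mul_radialMoment_comp_mul_right (f : ℝ → ℝ) {p r : ℝ} (hr : 0 < r) :
    r ^ p * radialMoment p (fun t => f (t * r)) = radialMoment p f := by
  have hcomp := integral_comp_mul_right_Ioi (fun t => t ^ (p - 1) * f t) 0 hr
  have hfactor : ∫ t in Set.Ioi (0 : ℝ), (t * r) ^ (p - 1) * f (t * r)
      = r ^ (p - 1) * ∫ t in Set.Ioi 0, t ^ (p - 1) * f (t * r) := by
    rw [← integral_const_mul]
    refine setIntegral_congr_fun measurableSet_Ioi fun t ht => ?_
    rw [mul_rpow (le_of_lt ht) hr.le]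
    ring
  rw [zero_mul, hfactor, smul_eq_mul, eq_inv_mul_iff_mul_eq₀ hr.ne'] at hcomp
  have hpow : r ^ p = r ^ (p - 1) * r := by rw [← rpow_add_one hr.ne', sub_add_cancel]
  rw [radialMoment, radialMoment, ← hcomp, hpow]
  ring

variable {m : ℕ} {v : EuclideanSpace ℝ (Fin m) → ℝ} {p : ℝ}

lemma smul_mem_ballBody_iff (hv : ∀ x, 0 ≤ v x) (hp : 0 < p) (x : EuclideanSpace ℝ (Fin m))
    {r : ℝ} (hr : 0 < r) :
    r • x ∈ ballBody v p ↔ r ≤ radialMoment p (fun t => v (t • x)) ^ (1 / p) := by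
  have hscale := rpow_mul_radialMoment_comp_mul_right (p := p) (fun t => v (t • x)) hr
  simp only [mul_smul] at hscale
  rw [one_div, le_rpow_inv_iff_of_pos hr.le (radialMoment_nonneg hp.le fun t => hv _) hp, ← hscale]
  exact (le_mul_iff_one_le_right (rpow_pos_of_pos hr p)).symm

lemma measurableSet_ballBody (hv : Measurable v) (p : ℝ) : MeasurableSet (ballBody v p) := by
  have hmeas : StronglyMeasurable fun z : EuclideanSpace ℝ (Fin m) × ℝ =>
      z.2 ^ (p - 1) * v (z.2 • z.1) :=
    ((measurable_snd.pow_const _).mul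
      (hv.comp (measurable_snd.smul measurable_fst))).stronglyMeasurable
  exact measurableSet_le measurable_const (hmeas.integral_prod_right'.measurable.const_mul p)

lemma lintegral_pow_mul_indicator_ballBody (hm : m ≠ 0) (hv : ∀ x, 0 ≤ v x) (hp : 0 < p)
    (x : EuclideanSpace ℝ (Fin m)) :
    ∫⁻ r in Set.Ioi (0 : ℝ), .ofReal (r ^ (m - 1)) * (ballBody v p).indicator 1 (r • x)
      = ENNReal.ofReal (radialMoment p (fun t => v (t • x)) ^ ((m : ℝ) / p) / m) := by
  have hmom : 0 ≤ radialMoment p fun t => v (t • x) := radialMoment_nonneg hp.le fun t => hv _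
  set R := radialMoment p (fun t => v (t • x)) ^ (1 / p) with hR_def
  have hR : 0 ≤ R := rpow_nonneg hmom _
  have hm0 : (0 : ℝ) < m := by positivity
  have hRm : radialMoment p (fun t => v (t • x)) ^ ((m : ℝ) / p) = R ^ (m : ℝ) * 1 := by
    rw [hR_def, ← rpow_mul hmom, one_div_mul_eq_div, mul_one]
  rw [hRm, ← radialMoment_indicator_Iic hm0 hR, ← lintegral_pow_mul_ofReal_eq hm
    (Set.indicator_nonneg fun _ _ => zero_le_one) (hasRadialMoment_indicator_Iic hm0 hR)]
  refine setLIntegral_congr_fun measurableSet_Ioi fun r hr => ?_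
  by_cases hrR : r ≤ R
  · simp [(smul_mem_ballBody_iff hv hp x hr).2 hrR, hrR]
  · simp [mt (smul_mem_ballBody_iff hv hp x hr).1 hrR, hrR]

end BallBody

section Cone

variable {m : ℕ} {v : EuclideanSpace ℝ (Fin m) → ℝ} {C : Set (EuclideanSpace ℝ (Fin m))} {q : ℝ}

lemma volume_ballBody_inter_cone (hm : m ≠ 0) (hv : ∀ x, 0 ≤ v x) (hvm : Measurable v) {p : ℝ}
    (hp : 0 < p) (hC : MeasurableSet C)
    (hcone : ∀ x, ∀ r : ℝ, 0 < r → (r • x ∈ C ↔ x ∈ C)) :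
    volume (ballBody v p ∩ C) =
      ∫⁻ φ : Metric.sphere (0 : EuclideanSpace ℝ (Fin m)) 1 in Subtype.val ⁻¹' C,
        .ofReal (radialMoment p (fun t => v (t • φ.1)) ^ ((m : ℝ) / p) / m)
        ∂(volume : Measure (EuclideanSpace ℝ (Fin m))).toSphere := by
  have : Nonempty (Fin m) := Fin.pos_iff_nonempty.1 (Nat.pos_of_ne_zero hm)
  have hK := measurableSet_ballBody hvm p
  rw [← Measure.restrict_apply hK, ← lintegral_indicator_one hK,
    setLIntegral_cone_eq volume (measurable_one.indicator hK) hC hcone, finrank_euclideanSpace_fin]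
  simp only [lintegral_pow_mul_indicator_ballBody hm hv hp]

namespace IsCenteredLogConcave

lemma hasRadialMoment {E : Type*} [NormedAddCommGroup E] [NormedSpace ℝ E] [FiniteDimensional ℝ E]
    [MeasurableSpace E] [BorelSpace E] {μ : Measure E} [μ.IsAddHaarMeasure] {v : E → ℝ}
    (hv : IsCenteredLogConcave v μ) {x : E} (hx : x ≠ 0) {s : ℝ} (hs : 0 < s) :
    HasRadialMoment s fun t => v (t • x) := by
  obtain ⟨C, b, hb, hle⟩ := hv.exists_le_mul_exp_neg_norm
  refine integrableOn_Ioi_rpow_mul_of_le_exp (mul_pos hb (norm_pos_iff.2 hx)) hs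
    (fun t => hv.isLogConcaveFn.nonneg _) (C := C) (fun t ht => ?_)
    (hv.measurable.comp (measurable_id.smul_const x))
  refine (hle _).trans_eq ?_
  rw [norm_smul, norm_of_nonneg ht.le]
  ring_nf

lemma withDensity_cone (hv : IsCenteredLogConcave v volume) (hm : m ≠ 0) (hC : MeasurableSet C)
    (hcone : ∀ x, ∀ r : ℝ, 0 < r → (r • x ∈ C ↔ x ∈ C)) :
    volume.withDensity (fun x => .ofReal (v x)) C =
      ∫⁻ φ : Metric.sphere (0 : EuclideanSpace ℝ (Fin m)) 1 in Subtype.val ⁻¹' C,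
        .ofReal (radialMoment m (fun t => v (t • φ.1)) / m)
        ∂(volume : Measure (EuclideanSpace ℝ (Fin m))).toSphere := by
  have : Nonempty (Fin m) := Fin.pos_iff_nonempty.1 (Nat.pos_of_ne_zero hm)
  rw [withDensity_apply _ hC, setLIntegral_cone_eq volume hv.measurable.ennreal_ofReal hC hcone,
    finrank_euclideanSpace_fin]
  exact lintegral_congr fun φ => lintegral_pow_mul_ofReal_eq hm
    (fun t => hv.isLogConcaveFn.nonneg _)
    (hv.hasRadialMoment (ne_zero_of_mem_unit_sphere φ) (by positivity))

theorem exp_neg_mul_withDensity_le_volume (hv : IsCenteredLogConcave v volume) (hm : m ≠ 0)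
    (hq : 0 ≤ q) (hC : MeasurableSet C) (hcone : ∀ x, ∀ r : ℝ, 0 < r → (r • x ∈ C ↔ x ∈ C)) :
    .ofReal (exp (-q) * v 0 ^ (-(q / (m + q)))) * volume.withDensity (fun x => .ofReal (v x)) C
      ≤ volume (ballBody v (m + q) ∩ C) := by
  have hm0 : (0 : ℝ) < m := by positivity
  have hv0 := hv.apply_zero_pos
  have hp : 0 < m + q := by linarith
  rw [hv.withDensity_cone hm hC hcone,
    volume_ballBody_inter_cone hm hv.isLogConcaveFn.nonneg hv.measurable hp hC hcone,
    ← lintegral_const_mul' _ _ ENNReal.ofReal_ne_top]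
  refine lintegral_mono fun φ => ?_
  have hφ := ne_zero_of_mem_unit_sphere φ
  have hray := exp_neg_mul_radialMoment_le (f := fun t => v (t • φ.1)) hm hq
    (fun t => hv.isLogConcaveFn.nonneg _) (by simpa using hv0)
    (fun t => by simpa using hv.le_exp_finrank_mul (t • φ.1)) (hv.hasRadialMoment hφ hm0)
    (hv.hasRadialMoment hφ hp)
  rw [zero_smul] at hray
  rw [← ENNReal.ofReal_mul (by positivity), ← mul_div_assoc]
  gcongr

theorem volume_le_exp_mul_withDensity (hv : IsCenteredLogConcave v volume) (hm : m ≠ 0)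
    (hq : 1 ≤ q) (hC : MeasurableSet C) (hcone : ∀ x, ∀ r : ℝ, 0 < r → (r • x ∈ C ↔ x ∈ C)) :
    volume (ballBody v (m + q) ∩ C) ≤ .ofReal (exp q * v 0 ^ (-(q / (m + q))))
      * volume.withDensity (fun x => .ofReal (v x)) C := by
  have hm0 : (0 : ℝ) < m := by positivity
  have hv0 := hv.apply_zero_pos
  have hp : 0 < m + q := by linarith
  rw [hv.withDensity_cone hm hC hcone,
    volume_ballBody_inter_cone hm hv.isLogConcaveFn.nonneg hv.measurable hp hC hcone,
    ← lintegral_const_mul' _ _ ENNReal.ofReal_ne_top]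
  refine lintegral_mono fun φ => ?_
  have hφ := ne_zero_of_mem_unit_sphere φ
  have hray := (hv.isLogConcaveFn.comp_linearMap (.toSpanSingleton ℝ _ φ.1)).rpow_radialMoment_le
    hm hq (by simpa using hv0) (hv.hasRadialMoment hφ hm0) (hv.hasRadialMoment hφ hp)
  rw [map_zero] at hray
  rw [← ENNReal.ofReal_mul (by positivity), ← mul_div_assoc]
  gcongr
  exact hray

lemma volume_ballBody_ne_zero (hv : IsCenteredLogConcave v volume) (hm : m ≠ 0) (hq : 0 ≤ q) :
    volume (ballBody v (m + q)) ≠ 0 := by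
  have hv0 := hv.apply_zero_pos
  have hmass : volume.withDensity (fun x => .ofReal (v x)) Set.univ ≠ 0 := by
    rw [withDensity_apply _ .univ, setLIntegral_univ, ← ofReal_integral_eq_lintegral_ofReal
      hv.integrable (.of_forall hv.isLogConcaveFn.nonneg)]
    exact (ENNReal.ofReal_pos.2 hv.integral_pos).ne'
  have hle := hv.exp_neg_mul_withDensity_le_volume hm hq .univ (by simp)
  rw [Set.inter_univ] at hle
  exact (lt_of_lt_of_le (ENNReal.mul_pos (ENNReal.ofReal_pos.2 (by positivity)).ne' hmass) hle).ne'

lemma volume_ballBody_ne_top (hv : IsCenteredLogConcave v volume) (hm : m ≠ 0) (hq : 1 ≤ q) :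
    volume (ballBody v (m + q)) ≠ ⊤ := by
  have := hv.integrable.lintegral_lt_top
  have hle := hv.volume_le_exp_mul_withDensity hm hq .univ (by simp)
  rw [Set.inter_univ, withDensity_apply _ .univ, setLIntegral_univ] at hle
  exact (hle.trans_lt (ENNReal.mul_lt_top ENNReal.ofReal_lt_top this)).ne

theorem volume_ballBody_le_exp_mul_volume_halfSpace (hv : IsCenteredLogConcave v volume)
    (hm : m ≠ 0) (hq : 1 ≤ q) (l : EuclideanSpace ℝ (Fin m) →L[ℝ] ℝ) :
    volume (ballBody v (m + q))
      ≤ .ofReal (exp (3 * q)) * volume (ballBody v (m + q) ∩ {x | 0 ≤ l x}) := by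
  set ν := volume.withDensity fun x => ENNReal.ofReal (v x)
  set κ := v 0 ^ (-(q / (m + q)))
  have hH : MeasurableSet {x | 0 ≤ l x} := measurableSet_le measurable_const l.measurable
  have hcone (x) (r : ℝ) (hr : 0 < r) : r • x ∈ {x | 0 ≤ l x} ↔ x ∈ {x | 0 ≤ l x} := by
    simp [hr]
  have hexp : exp q * κ * exp 1 ≤ exp (3 * q) * (exp (-q) * κ) := by
    have hκ : 0 ≤ κ := rpow_nonneg hv.apply_zero_pos.le _
    rw [mul_right_comm, ← exp_add, ← mul_assoc, ← exp_add]
    exact mul_le_mul_of_nonneg_right (exp_le_exp.2 (by linarith)) hκ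
  calc volume (ballBody v (m + q)) = volume (ballBody v (m + q) ∩ Set.univ) := by
        rw [Set.inter_univ]
    _ ≤ .ofReal (exp q * κ) * ν Set.univ :=
        hv.volume_le_exp_mul_withDensity hm hq .univ (by simp)
    _ ≤ .ofReal (exp q * κ) * (.ofReal (exp 1) * ν {x | 0 ≤ l x}) := by
        gcongr
        exact hv.withDensity_univ_le l
    _ = .ofReal (exp q * κ * exp 1) * ν {x | 0 ≤ l x} := by
        rw [ENNReal.ofReal_mul' (exp_nonneg 1), mul_assoc]
    _ ≤ .ofReal (exp (3 * q) * (exp (-q) * κ)) * ν {x | 0 ≤ l x} := by gcongr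
    _ = .ofReal (exp (3 * q)) * (.ofReal (exp (-q) * κ) * ν {x | 0 ≤ l x}) := by
        rw [ENNReal.ofReal_mul (exp_nonneg _), mul_assoc]
    _ ≤ .ofReal (exp (3 * q)) * volume (ballBody v (m + q) ∩ {x | 0 ≤ l x}) := by
        gcongr
        exact hv.exp_neg_mul_withDensity_le_volume hm (zero_le_one.trans hq) hH hcone

theorem exp_neg_three_le_rpow_div (hv : IsCenteredLogConcave v volume) (hm : m ≠ 0) (hq : 1 ≤ q)
    (l : EuclideanSpace ℝ (Fin m) →L[ℝ] ℝ) :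
    exp (-3) ≤ ((volume (ballBody v (m + q) ∩ {x | 0 ≤ l x})).toReal
      / (volume (ballBody v (m + q))).toReal) ^ (1 / q) := by
  have hq0 : 0 < q := by linarith
  have hK_top := hv.volume_ballBody_ne_top hm hq
  have hK_pos : 0 < (volume (ballBody v (m + q))).toReal :=
    ENNReal.toReal_pos (hv.volume_ballBody_ne_zero hm hq0.le) hK_top
  have hKH_top := measure_ne_top_of_subset (Set.inter_subset_left (t := {x | 0 ≤ l x})) hK_top
  have hle := ENNReal.toReal_mono (ENNReal.mul_ne_top ENNReal.ofReal_ne_top hKH_top)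
    (hv.volume_ballBody_le_exp_mul_volume_halfSpace hm hq l)
  rw [ENNReal.toReal_mul, ENNReal.toReal_ofReal (exp_nonneg _)] at hle
  rw [one_div, le_rpow_inv_iff_of_pos (exp_nonneg _) (by positivity) hq0, ← exp_mul,
    le_div_iff₀ hK_pos, neg_mul, exp_neg, inv_mul_le_iff₀ (exp_pos _)]
  exact hle

end IsCenteredLogConcave

end Cone

/-- halfspace proportion of Ball's body `K_{m+q}(w)` is bounded below. -/
theorem statement19 :
    ∃ c : ℝ, 0 < c ∧
      ∀ (m : ℕ), 1 ≤ m →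
      ∀ (w : EuclideanSpace ℝ (Fin m) → ℝ),
        IsLogConcaveFn w → Integrable w → 0 < ∫ x, w x → 0 < w 0 →
        (∫ x, w x • x) = 0 →
        ∀ q : ℝ, 1 ≤ q →
        ∀ θ : EuclideanSpace ℝ (Fin m), ‖θ‖ = 1 →
          c ≤ ((volume (ballBody w ((m : ℝ) + q) ∩ {x | 0 ≤ ⟪x, θ⟫})).toReal /
                (volume (ballBody w ((m : ℝ) + q))).toReal) ^ (1/q) := by
  refine ⟨exp (-3), exp_pos _, fun m hm w hw hw_int hw_pos _ hw_bary q hq θ _ => ?_⟩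
  have hv : IsCenteredLogConcave (openCore w) volume :=
    hw.isCenteredLogConcave_openCore hw_int hw_pos hw_bary
  have h0 : 0 ∈ interior {x | 0 < w x} := by
    rw [← setOf_openCore_pos]
    exact hv.apply_zero_pos
  have hratio := hv.exp_neg_three_le_rpow_div (Nat.one_le_iff_ne_zero.1 hm) hq (innerSL ℝ θ)
  simpa only [ballBody_openCore hw h0, innerSL_apply_apply, real_inner_comm θ] using hratio
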